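/- arXiv:2104.12729 — 13 statements merged into one kernel-verified Lean document; each statement's English description precedes it below -/
import Mathlib

section
/- Let n ≥ 4 be a natural number. Every element g of the alternating group on n letters can be written as a product of two squares of elements of the alternating group: there exist h and t in alternatingGroup (Fin n) such that g = h^2 * t^2. (Hence the verbal width of A_n with respect to the set of squares is at most 2.) -/
/-- `g` is a product of two elements of odd order supported inside `g.support`. -/
def OddSplit {α : Type} [DecidableEq α] [Fintype α] (g : Equiv.Perm α) : Prop :=
  ∃ a b : Equiv.Perm α, a * b = g ∧ Odd (orderOf a) ∧ Odd (orderOf b) ∧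
    a.support ⊆ g.support ∧ b.support ⊆ g.support

theorem odd_orderOf_mul_aux {G : Type} [Group G] {a b : G} (h : Commute a b)
    (ha : Odd (orderOf a)) (hb : Odd (orderOf b)) : Odd (orderOf (a * b)) :=
  Odd.of_dvd_nat (ha.mul hb) h.orderOf_mul_dvd_mul_orderOf

theorem OddSplit.mul {α : Type} [DecidableEq α] [Fintype α] {f g : Equiv.Perm α}
    (hd : f.Disjoint g) (hf : OddSplit f) (hg : OddSplit g) : OddSplit (f * g) := by
  obtain ⟨a, b, hab, ha, hb, hsa, hsb⟩ := hf
  obtain ⟨c, d, hcd, hc, hdd, hsc, hsd⟩ := hg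
  have hac := (hd.mono hsa hsc).commute
  have hbc := (hd.mono hsb hsc).commute
  have hbd := (hd.mono hsb hsd).commute
  refine ⟨a * c, b * d, ?_, odd_orderOf_mul_aux hac ha hc, odd_orderOf_mul_aux hbd hb hdd, ?_, ?_⟩
  · rw [← hab, ← hcd]
    calc a * c * (b * d) = a * (c * b) * d := by group
      _ = a * (b * c) * d := by rw [hbc.eq]
      _ = _ := by group
  · rw [hd.support_mul]
    exact (Equiv.Perm.support_mul_le a c).trans (Finset.union_subset_union hsa hsc)
  · rw [hd.support_mul]
    exact (Equiv.Perm.support_mul_le b d).trans (Finset.union_subset_union hsb hsd)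

theorem formPerm_append_aux {α : Type} [DecidableEq α] (l m : List α) (y : α) :
    (l ++ y :: m).formPerm = (l ++ [y]).formPerm * (y :: m).formPerm := by
  induction l with
  | nil => simp
  | cons x l ih =>
    cases l with
    | nil => simp [List.formPerm_cons_cons]
    | cons z l =>
      simp only [List.cons_append, List.formPerm_cons_cons] at ih ⊢
      rw [ih, mul_assoc]

theorem exists_list_aux {α : Type} [DecidableEq α] [Fintype α] {c : Equiv.Perm α}
    (hc : c.IsCycle) : ∃ l : List α, l.Nodup ∧ l.formPerm = c ∧ l.toFinset = c.support ∧
      l.length = c.support.card ∧ 2 ≤ l.length := by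
  obtain ⟨x, hx, -⟩ := id hc
  have h1 : (c.toList x).formPerm = c := by
    rw [Equiv.Perm.formPerm_toList, hc.cycleOf_eq hx]
  have h2 := Equiv.Perm.nodup_toList c x
  refine ⟨c.toList x, h2, h1, ?_, ?_, ?_⟩
  · rw [← List.support_formPerm_of_nodup _ h2 (Equiv.Perm.toList_ne_singleton c x), h1]
  · rw [Equiv.Perm.length_toList, hc.cycleOf_eq hx]
  · exact Equiv.Perm.two_le_length_toList_iff_mem_support.2 (by simpa using hx)

theorem oddSplit_pair {α : Type} [DecidableEq α] [Fintype α] {c d : Equiv.Perm α}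
    (hc : c.IsCycle) (hd : d.IsCycle) (hcd : c.Disjoint d)
    (hce : Even c.support.card) (hde : Even d.support.card) : OddSplit (c * d) := by
  obtain ⟨l, hln, hlc, hls, hll, hl2⟩ := exists_list_aux hc
  obtain ⟨m, hmn, hmc, hms, hml, hm2⟩ := exists_list_aux hd
  have hdis := hcd.disjoint_support
  have hsup := hcd.support_mul
  rw [← hls, ← hms] at hdis hsup
  rw [← hll] at hce
  rw [← hml] at hde
  obtain rfl | ⟨l, u, rfl⟩ := List.eq_nil_or_concat l
  · simp at hl2
  rw [List.concat_eq_append] at *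
  match m, hm2 with
  | y :: v :: m, _ =>
  have hldis : List.Disjoint (l ++ [u]) (y :: v :: m) := by
    rwa [List.disjoint_toFinset_iff_disjoint] at hdis
  have hnd : (l ++ [u] ++ y :: v :: m).Nodup := List.nodup_append'.2 ⟨hln, hmn, hldis⟩
  have hnd' : (l ++ u :: v :: m).Nodup :=
    hnd.sublist (by simp)
  have huy : u ≠ y := by rintro rfl; exact hldis (a := u) (by simp) (by simp)
  have huv : u ≠ v := by rintro rfl; exact hldis (a := u) (by simp) (by simp)
  have hyv : y ≠ v := by rintro rfl; simp at hmn
  have hp : (l ++ u :: v :: m).formPerm = c * Equiv.swap u v * (v :: m).formPerm := by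
    rw [formPerm_append_aux, hlc, List.formPerm_cons_cons, mul_assoc]
  have hd' : d = Equiv.swap y v * (v :: m).formPerm := by
    rw [← hmc, List.formPerm_cons_cons]
  have h3 : (Equiv.swap y v * Equiv.swap u v).IsThreeCycle := by
    rw [Equiv.swap_comm y v, Equiv.swap_comm u v]
    exact Equiv.Perm.isThreeCycle_swap_mul_swap_same hyv.symm huv.symm huy.symm
  refine ⟨c * (Equiv.swap y v * Equiv.swap u v) * c⁻¹, (l ++ u :: v :: m).formPerm,
    ?_, ?_, ?_, ?_, ?_⟩
  · rw [hp, hd']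
    calc _ = c * Equiv.swap y v * (Equiv.swap u v * Equiv.swap u v) * (v :: m).formPerm := by group
      _ = _ := by rw [Equiv.swap_mul_self]; group
  · have : orderOf (c * (Equiv.swap y v * Equiv.swap u v) * c⁻¹) = 3 := by
      rw [← h3.orderOf, ← MulAut.conj_apply]
      exact MulEquiv.orderOf_eq (MulAut.conj c) _
    rw [this]; decide
  · rw [(List.isCycle_formPerm hnd' (by simp; omega)).orderOf,
      List.support_formPerm_of_nodup _ hnd' (by intro x h; have := congrArg List.length h; simp at this; omega),
      List.toFinset_card_of_nodup hnd']
    simp only [List.length_append, List.length_cons, List.length_nil] at *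
    rw [Nat.even_iff] at hce hde
    rw [Nat.odd_iff]
    omega
  · have h1 : (Equiv.swap y v * Equiv.swap u v).support ⊆ (c * d).support := by
      refine (Equiv.Perm.support_mul_le _ _).trans ?_
      rw [Equiv.Perm.support_swap hyv, Equiv.Perm.support_swap huv, hsup]
      intro z; simp; tauto
    have h2 : c.support ⊆ (c * d).support := by
      rw [hcd.support_mul]; exact Finset.subset_union_left
    refine (Equiv.Perm.support_mul_le _ _).trans (Finset.union_subset
      ((Equiv.Perm.support_mul_le _ _).trans (Finset.union_subset h2 h1)) ?_)
    rwa [Equiv.Perm.support_inv]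
  · refine (List.support_formPerm_le _).trans ?_
    rw [hsup]
    intro z; simp; tauto

theorem oddSplit_cycle {α : Type} [DecidableEq α] [Fintype α] {c : Equiv.Perm α}
    (hc : c.IsCycle) (ho : Odd c.support.card) : OddSplit c :=
  ⟨c, 1, by simp, by rwa [hc.orderOf], by simp, subset_rfl, by simp⟩

theorem oddSplit_of_sign {α : Type} [DecidableEq α] [Fintype α] (k : ℕ) :
    ∀ g : Equiv.Perm α, g.support.card = k → Equiv.Perm.sign g = 1 → OddSplit g := by
  induction k using Nat.strong_induction_on with
  | _ k ih =>
  intro g hk hg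
  have key : ∀ c g' : Equiv.Perm α, c.Disjoint g' → g = c * g' → c ≠ 1 → 
      Equiv.Perm.sign c = 1 → OddSplit c → OddSplit g := by
    intro c g' hd he h1 hs hc
    subst he
    refine hc.mul hd (ih _ ?_ g' rfl (by simpa [hs] using hg))
    rw [← hk, hd.card_support_mul]
    have : 0 < c.support.card := by
      rw [Finset.card_pos, Finset.nonempty_iff_ne_empty, Ne, Equiv.Perm.support_eq_empty_iff]
      exact h1
    omega
  by_cases h1 : g = 1
  · subst h1; exact ⟨1, 1, by simp, by simp, by simp, by simp, by simp⟩
  by_cases hodd : ∃ c ∈ g.cycleFactorsFinset, Odd c.support.card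
  · obtain ⟨c, hcg, hco⟩ := hodd
    have hc := (Equiv.Perm.mem_cycleFactorsFinset_iff.1 hcg).1
    have hd := Equiv.Perm.disjoint_mul_inv_of_mem_cycleFactorsFinset hcg
    refine key c (g * c⁻¹) hd.symm ?_ hc.ne_one ?_ (oddSplit_cycle hc hco)
    · rw [← hd.commute.eq]; group
    · rw [hc.sign, hco.neg_one_pow]; simp
  · push Not at hodd
    obtain ⟨c, hcg⟩ : g.cycleFactorsFinset.Nonempty := by
      rw [Finset.nonempty_iff_ne_empty, Ne, Equiv.Perm.cycleFactorsFinset_eq_empty_iff]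
      exact h1
    have hc := (Equiv.Perm.mem_cycleFactorsFinset_iff.1 hcg).1
    have hd := Equiv.Perm.disjoint_mul_inv_of_mem_cycleFactorsFinset hcg
    have hce : Even c.support.card := by simpa using hodd c hcg
    have hcs : Equiv.Perm.sign c = -1 := by rw [hc.sign, hce.neg_one_pow]
    obtain ⟨e, heg⟩ : (g * c⁻¹).cycleFactorsFinset.Nonempty := by
      rw [Finset.nonempty_iff_ne_empty, Ne, Equiv.Perm.cycleFactorsFinset_eq_empty_iff]
      intro h
      have := congrArg Equiv.Perm.sign h
      simp [hg, hcs] at this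
    have he := (Equiv.Perm.mem_cycleFactorsFinset_iff.1 heg).1
    have hd2 := Equiv.Perm.disjoint_mul_inv_of_mem_cycleFactorsFinset heg
    have hes := Equiv.Perm.mem_cycleFactorsFinset_support_le heg
    have hee : Even e.support.card := by
      rw [Equiv.Perm.cycleFactorsFinset_mul_inv_mem_eq_sdiff hcg] at heg
      simpa using hodd e (Finset.mem_sdiff.1 heg).1
    have hes' : Equiv.Perm.sign e = -1 := by rw [he.sign, hee.neg_one_pow]
    have hce' : c.Disjoint e := hd.symm.mono le_rfl hes
    have hgc : g * c⁻¹ = e * (g * c⁻¹ * e⁻¹) := by rw [← hd2.commute.eq]; group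
    have hg' : (g * c⁻¹ * e⁻¹).support ≤ (g * c⁻¹).support := by
      refine (Equiv.Perm.support_mul_le _ _).trans (Finset.union_subset subset_rfl ?_)
      rwa [Equiv.Perm.support_inv]
    refine key (c * e) (g * c⁻¹ * e⁻¹) ?_ ?_ ?_ (by simp [hcs, hes']) 
      (oddSplit_pair hc he hce' hce hee)
    · exact Equiv.Perm.Disjoint.mul_left (hd.symm.mono le_rfl hg') hd2.symm
    · rw [mul_assoc, ← hgc, ← hd.commute.eq]; group
    · intro h
      have h0 := hce'.card_support_mul
      rw [h] at h0
      have := hc.two_le_card_support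
      rw [Equiv.Perm.support_one, Finset.card_empty] at h0
      omega

theorem exists_sq_aux {n : ℕ} (a : Equiv.Perm (Fin n)) (ha : Odd (orderOf a)) :
    ∃ h : alternatingGroup (Fin n), a = ((h ^ 2 : alternatingGroup (Fin n)) : Equiv.Perm (Fin n)) := by
  obtain ⟨k, hk⟩ := ha
  have h1 : a ^ (2 * k + 1) = 1 := by rw [← hk, pow_orderOf_eq_one]
  have hs : Equiv.Perm.sign a = 1 := by
    have h2 := congrArg Equiv.Perm.sign h1
    rw [map_pow, pow_succ, pow_mul, Int.units_sq, one_pow, one_mul, map_one] at h2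
    exact h2
  refine ⟨⟨a ^ (k + 1), ?_⟩, ?_⟩
  · rw [Equiv.Perm.mem_alternatingGroup, map_pow, hs, one_pow]
  · rw [Subgroup.coe_pow, ← pow_mul, show (k + 1) * 2 = 2 * k + 1 + 1 by ring, pow_succ, h1,
      one_mul]

theorem alternating_group_width_by_squares_le_two (n : ℕ) (hn : 4 ≤ n)
    (g : alternatingGroup (Fin n)) :
    ∃ h t : alternatingGroup (Fin n), g = h ^ 2 * t ^ 2 := by
  obtain ⟨a, b, hab, ha, hb, -, -⟩ := oddSplit_of_sign _ g.1 rfl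
    (Equiv.Perm.mem_alternatingGroup.1 g.2)
  obtain ⟨h, hh⟩ := exists_sq_aux a ha
  obtain ⟨t, ht⟩ := exists_sq_aux b hb
  refine ⟨h, t, Subtype.ext ?_⟩
  rw [Subgroup.coe_mul, ← hh, ← ht, hab]
end

section
/- For every natural number n ≥ 4 there exists an element g of the alternating group alternatingGroup (Fin n) that is not the square of any element of alternatingGroup (Fin n), i.e. there is no h in alternatingGroup (Fin n) with h^2 = g. (Hence the verbal width of A_n by squares is exactly 2 and not 1.) -/
theorem exists_nonsquare_in_alternating_group (n : ℕ) (hn : 4 ≤ n) :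
    ∃ g : alternatingGroup (Fin n), ∀ h : alternatingGroup (Fin n), h ^ 2 ≠ g := by
  by_contra hcon
  push Not at hcon
  have hsurj : Function.Surjective (fun h : alternatingGroup (Fin n) => h ^ 2) := hcon
  have hinj := Finite.injective_iff_surjective.mpr hsurj
  let a : Fin n := ⟨0, by omega⟩
  let b : Fin n := ⟨1, by omega⟩
  let c : Fin n := ⟨2, by omega⟩
  let d : Fin n := ⟨3, by omega⟩
  have hab : a ≠ b := by simp [a, b]
  have hac : a ≠ c := by simp [a, c]
  have had : a ≠ d := by simp [a, d]
  have hbc : b ≠ c := by simp [b, c]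
  have hbd : b ≠ d := by simp [b, d]
  have hcd : c ≠ d := by simp [c, d]
  have hmem : Equiv.swap a b * Equiv.swap c d ∈ alternatingGroup (Fin n) := by
    rw [Equiv.Perm.mem_alternatingGroup, map_mul, Equiv.Perm.sign_swap hab,
      Equiv.Perm.sign_swap hcd]
    rfl
  have hcomm : Commute (Equiv.swap a b) (Equiv.swap c d) := by
    apply Equiv.Perm.Disjoint.commute
    intro x
    by_cases h1 : x = a
    · right; subst h1; exact Equiv.swap_apply_of_ne_of_ne hac had
    by_cases h2 : x = b
    · right; subst h2; exact Equiv.swap_apply_of_ne_of_ne hbc hbd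
    left; exact Equiv.swap_apply_of_ne_of_ne h1 h2
  have hsq : (⟨_, hmem⟩ : alternatingGroup (Fin n)) ^ 2 = 1 ^ 2 := by
    apply Subtype.ext
    change (Equiv.swap a b * Equiv.swap c d) ^ 2 = 1 ^ 2
    rw [hcomm.mul_pow, sq, sq, Equiv.swap_mul_self, Equiv.swap_mul_self, one_pow, one_mul]
  have h1 := congrArg Subtype.val (hinj hsq)
  have h2 : (Equiv.swap a b * Equiv.swap c d) a = a := by
    have h3 := congrArg (fun f : Equiv.Perm (Fin n) => f a) h1
    exact h3
  rw [Equiv.Perm.mul_apply, Equiv.swap_apply_of_ne_of_ne hac had, Equiv.swap_apply_left] at h2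
  exact hab h2.symm
end

section
/- Criterion for squareness in A_n: let g be an element of alternatingGroup (Fin n), viewed as a permutation of Fin n. Then there exists h in alternatingGroup (Fin n) with h^2 = g if and only if both of the following hold: (1) for every even natural number l, the multiplicity of l in Equiv.Perm.cycleType g is even; and (2) at least one of: (a) g has at least two fixed points, i.e. n - (Equiv.Perm.support g).card ≥ 2; (b) some odd length l occurs with multiplicity at least 2 in Equiv.Perm.cycleType g; (c) the total number of even-length cycles of g (the cardinality of the multiset of even entries of Equiv.Perm.cycleType g) is divisible by 4 (equivalently, the sum over even l of half the multiplicity of l is even). -/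
open Equiv Equiv.Perm

/-- Cycle lengths (at least two) of the square of a cycle of length `a`. -/
def sqLen (a : ℕ) : Multiset ℕ :=
  if Even a then (if a = 2 then 0 else Multiset.replicate 2 (a / 2)) else {a}

/-- The number of even entries. -/
def evCount (M : Multiset ℕ) : ℕ := Multiset.card (M.filter (fun l => Even l))

lemma cycleType_sq_of_isCycle {α : Type*} [Fintype α] [DecidableEq α] (c : Perm α)
    (hc : c.IsCycle) : (c ^ 2).cycleType = sqLen c.support.card := by
  have hord : orderOf c = c.support.card := hc.orderOf
  unfold sqLen
  split_ifs with h1 h2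
  · rw [cycleType_eq_zero, ← h2, ← hord, pow_orderOf_eq_one]
  · obtain ⟨k, hk⟩ := h1
    have h2le := hc.two_le_card_support
    have hsup : (c ^ 2).support = c.support := by
      apply hc.support_pow_of_pos_of_lt_orderOf
      · norm_num
      · omega
    have hk2 : c.support.card / 2 = k := by omega
    have hordsq : (c ^ 2) ^ k = 1 := by
      rw [← pow_mul, orderOf_dvd_iff_pow_eq_one.symm, hord]
      exact ⟨1, by omega⟩
    have hall : ∀ m ∈ (c ^ 2).cycleType, m = k := by
      intro m hm
      have hdvd : m ∣ k :=
        (dvd_of_mem_cycleType hm).trans (orderOf_dvd_of_pow_eq_one hordsq)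
      obtain ⟨d, τ, hd, hdis, hcyc, hcard⟩ := mem_cycleType_iff.1 hm
      obtain ⟨x, hx⟩ := hcyc.nonempty_support
      have hτ : τ x = x := (hdis x).resolve_left (mem_support.1 hx)
      have e1 : ((c ^ 2) ^ m) x = x := by
        rw [hd, hdis.commute.mul_pow, Perm.mul_apply, pow_apply_eq_self_of_apply_eq_self hτ,
          ← hcard, ← hcyc.orderOf, pow_orderOf_eq_one]
        rfl
      have hxc : c x ≠ x := by
        rw [← mem_support, ← hsup, mem_support, hd, Perm.mul_apply, hτ]
        exact mem_support.1 hx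
      have e2 : c ^ (2 * m) = 1 := by
        rw [hc.pow_eq_one_iff]
        exact ⟨x, hxc, by rw [pow_mul]; exact e1⟩
      have e3 := orderOf_dvd_of_pow_eq_one e2
      rw [hord, hk, ← two_mul] at e3
      exact Nat.dvd_antisymm hdvd (Nat.dvd_of_mul_dvd_mul_left (by norm_num) e3)
    have hrep := Multiset.eq_replicate_card.2 hall
    have hsum := sum_cycleType (c ^ 2)
    rw [hsup, hrep, Multiset.sum_replicate, hk, smul_eq_mul] at hsum
    have : Multiset.card (c ^ 2).cycleType = 2 := by
      have hkpos : 0 < k := by omega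
      nlinarith
    rw [hrep, this, hk2]
  · have hcyc : (c ^ 2).IsCycle := by
      rw [hc.pow_iff, hord]
      exact (Nat.coprime_two_left).2 (Nat.not_even_iff_odd.1 h1)
    rw [hcyc.cycleType]
    congr 1
    have : (c ^ 2).support = c.support := by
      apply support_pow_coprime
      rw [hord]
      exact (Nat.coprime_two_left).2 (Nat.not_even_iff_odd.1 h1)
    rw [this]

lemma cycleType_sq {α : Type*} [Fintype α] [DecidableEq α] (h : Perm α) :
    (h ^ 2).cycleType = h.cycleType.bind sqLen := by
  induction h using cycle_induction_on with
  | base_one => simp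
  | base_cycles σ hσ => rw [cycleType_sq_of_isCycle σ hσ, hσ.cycleType]; simp
  | induction_disjoint σ τ hd hc h1 h2 =>
    rw [hd.commute.mul_pow, (hd.pow_disjoint_pow 2 2).cycleType_mul, hd.cycleType_mul,
      Multiset.add_bind, h1, h2]

lemma evCount_cons (a : ℕ) (M : Multiset ℕ) :
    evCount (a ::ₘ M) = (if Even a then 1 else 0) + evCount M := by
  unfold evCount
  split_ifs with h
  · simp [h, add_comm]
  · simp [h]

lemma evCount_add (M N : Multiset ℕ) : evCount (M + N) = evCount M + evCount N := by
  simp [evCount]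

lemma sign_eq_evCount {α : Type*} [Fintype α] [DecidableEq α] (h : Perm α) :
    sign h = (-1) ^ evCount h.cycleType := by
  rw [sign_of_cycleType']
  induction h.cycleType using Multiset.induction_on with
  | empty => simp [evCount]
  | cons a M ih =>
    rw [Multiset.map_cons, Multiset.prod_cons, ih, evCount_cons, pow_add]
    congr 1
    split_ifs with h
    · simp [h.neg_one_pow]
    · simp [(Nat.not_even_iff_odd.1 h).neg_one_pow]

lemma mem_alt_iff {α : Type*} [Fintype α] [DecidableEq α] (h : Perm α) :
    h ∈ alternatingGroup α ↔ Even (evCount h.cycleType) := by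
  rw [mem_alternatingGroup, sign_eq_evCount]
  constructor
  · intro hh
    by_contra hc
    rw [(Nat.not_even_iff_odd.1 hc).neg_one_pow] at hh
    exact absurd hh (by decide)
  · exact fun hh => hh.neg_one_pow

lemma even_count_bind (M : Multiset ℕ) (l : ℕ) (hl : Even l) :
    Even ((M.bind sqLen).count l) := by
  induction M using Multiset.induction_on with
  | empty => simp
  | cons a M ih =>
    rw [Multiset.cons_bind, Multiset.count_add]
    refine Even.add ?_ ih
    unfold sqLen
    split_ifs with h1 h2
    · simp
    · rw [Multiset.count_replicate]; split_ifs <;> decide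
    · rw [Multiset.count_singleton, if_neg]
      · decide
      · rintro rfl; exact h1 hl

lemma evCount_bind (M : Multiset ℕ) (hM : ∀ a ∈ M, Even a → a ≠ 2 ∧ Even (a / 2)) :
    evCount (M.bind sqLen) = 2 * evCount M := by
  induction M using Multiset.induction_on with
  | empty => simp [evCount]
  | cons a M ih =>
    rw [Multiset.cons_bind, evCount_add, evCount_cons,
      ih (fun b hb => hM b (Multiset.mem_cons_of_mem hb)), mul_add]
    congr 1
    have ha := hM a (Multiset.mem_cons_self a M)
    unfold sqLen
    split_ifs with h1 h2
    · exact absurd h2 (ha h1).1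
    · rw [evCount, Multiset.filter_eq_self.2]
      · simp
      · intro b hb
        rw [Multiset.eq_of_mem_replicate hb]
        exact (ha h1).2
    · simpa [evCount] using h1

lemma sum_sqLen_le (a : ℕ) : (sqLen a).sum ≤ a := by
  unfold sqLen
  split_ifs <;> simp
  omega

lemma sum_bind_le (M : Multiset ℕ) : (M.bind sqLen).sum ≤ M.sum := by
  induction M using Multiset.induction_on with
  | empty => simp
  | cons a M ih =>
    rw [Multiset.cons_bind, Multiset.sum_add, Multiset.sum_cons]
    exact add_le_add (sum_sqLen_le a) ih

lemma bind_sqLen_odd (O : Multiset ℕ) (hO : ∀ a ∈ O, ¬ Even a) : O.bind sqLen = O := by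
  induction O using Multiset.induction_on with
  | empty => simp
  | cons a M ih =>
    rw [Multiset.cons_bind, ih (fun b hb => hO b (Multiset.mem_cons_of_mem hb)), sqLen,
      if_neg (hO a (Multiset.mem_cons_self a M)), Multiset.singleton_add]

lemma sqLen_double (a : ℕ) (ha : 2 ≤ a) : sqLen (2 * a) = Multiset.replicate 2 a := by
  rw [sqLen, if_pos (even_two_mul a), if_neg (by omega), Nat.mul_div_cancel_left a (by norm_num)]

lemma bind_sqLen_double (E : Multiset ℕ) (hE : ∀ a ∈ E, 2 ≤ a) :
    (E.map (2 * ·)).bind sqLen = 2 • E := by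
  induction E using Multiset.induction_on with
  | empty => simp
  | cons a M ih =>
    rw [Multiset.map_cons, Multiset.cons_bind,
      ih (fun b hb => hE b (Multiset.mem_cons_of_mem hb)),
      sqLen_double a (hE a (Multiset.mem_cons_self a M)), ← Multiset.singleton_add a M, nsmul_add,
      Multiset.nsmul_singleton]

lemma evCount_double (E : Multiset ℕ) : evCount (E.map (2 * ·)) = Multiset.card E := by
  rw [evCount, Multiset.filter_eq_self.2]
  · simp
  · intro b hb
    obtain ⟨c, -, rfl⟩ := Multiset.mem_map.1 hb
    exact even_two_mul c

lemma evCount_odd (O : Multiset ℕ) (hO : ∀ a ∈ O, ¬ Even a) : evCount O = 0 := by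
  rw [evCount, Multiset.filter_eq_nil.2 hO]; rfl

lemma exists_of_multiset {n : ℕ} (g : alternatingGroup (Fin n)) (M : Multiset ℕ)
    (h2 : ∀ a ∈ M, 2 ≤ a) (hs : M.sum ≤ n) (he : Even (evCount M))
    (hb : M.bind sqLen = (g : Perm (Fin n)).cycleType) :
    ∃ h : alternatingGroup (Fin n), h ^ 2 = g := by
  obtain ⟨h, hh⟩ := (exists_with_cycleType_iff (Fin n) (m := M)).2 ⟨by simpa using hs, h2⟩
  have hc : IsConj (h ^ 2) (g : Perm (Fin n)) := by
    rw [isConj_iff_cycleType_eq, cycleType_sq, hh, hb]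
  obtain ⟨c, hc⟩ := isConj_iff.1 hc
  refine ⟨⟨c * h * c⁻¹, ?_⟩, ?_⟩
  · rw [mem_alt_iff, cycleType_conj, hh]; exact he
  · apply Subtype.ext
    rw [← hc]
    simp [pow_two, mul_assoc]

theorem square_criterion_in_alternating_group (n : ℕ) (g : alternatingGroup (Fin n)) :
    (∃ h : alternatingGroup (Fin n), h ^ 2 = g) ↔
      ((∀ l : ℕ, Even l →
          Even (Multiset.count l (Equiv.Perm.cycleType (g : Equiv.Perm (Fin n))))) ∧
        (n - (Equiv.Perm.support (g : Equiv.Perm (Fin n))).card ≥ 2 ∨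
          (∃ l : ℕ, Odd l ∧
            2 ≤ Multiset.count l (Equiv.Perm.cycleType (g : Equiv.Perm (Fin n)))) ∨
          4 ∣ Multiset.card
            (Multiset.filter (fun l => Even l)
              (Equiv.Perm.cycleType (g : Equiv.Perm (Fin n)))))) := by
  rw [← sum_cycleType]
  constructor
  · rintro ⟨⟨h, hh⟩, rfl⟩
    have hct : (((⟨h, hh⟩ : alternatingGroup (Fin n)) ^ 2 : alternatingGroup (Fin n)) :
        Perm (Fin n)).cycleType = h.cycleType.bind sqLen := cycleType_sq h
    rw [hct]
    have hle : h.cycleType.sum ≤ n := by simpa using sum_cycleType_le h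
    rw [mem_alt_iff] at hh
    have hge : ∀ a ∈ h.cycleType, 2 ≤ a := fun a ha => two_le_of_mem_cycleType ha
    generalize h.cycleType = M at *
    refine ⟨fun l hl => even_count_bind M l hl, ?_⟩
    by_contra! hcon
    obtain ⟨hA, hB, hC⟩ := hcon
    apply hC
    change 4 ∣ evCount _
    rw [evCount_bind]
    · obtain ⟨k, hk⟩ := hh
      exact ⟨k, by omega⟩
    · intro a ha hae
      obtain ⟨N, rfl⟩ := Multiset.exists_cons_of_mem ha
      have ha2 : a ≠ 2 := by
        rintro rfl
        have := sum_bind_le N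
        rw [Multiset.cons_bind, Multiset.sum_add] at hA
        rw [Multiset.sum_cons] at hle
        have h0 : (sqLen 2).sum = 0 := by simp [sqLen]
        omega
      refine ⟨ha2, ?_⟩
      by_contra hodd
      have := hB (a / 2) (Nat.not_even_iff_odd.1 hodd)
      rw [Multiset.cons_bind, Multiset.count_add, sqLen, if_pos hae, if_neg ha2,
        Multiset.count_replicate_self] at this
      omega
  · rintro ⟨h1, h2⟩
    have hle : (g : Perm (Fin n)).cycleType.sum ≤ n := by
      simpa using sum_cycleType_le (g : Perm (Fin n))
    have hge : ∀ a ∈ (g : Perm (Fin n)).cycleType, 2 ≤ a :=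
      fun a ha => two_le_of_mem_cycleType ha
    have key := exists_of_multiset g
    generalize (g : Perm (Fin n)).cycleType = m at *
    obtain ⟨E, hE⟩ : ∃ E : Multiset ℕ, m.filter (fun l => Even l) = 2 • E := by
      obtain ⟨E, hE⟩ := Multiset.exists_smul_of_dvd_count (m.filter (fun l => Even l)) (k := 2) (by
        intro a ha
        have hev := (Multiset.mem_filter.1 ha).2
        rw [Multiset.count_filter_of_pos hev]
        exact (h1 a hev).two_dvd)
      exact ⟨E, hE⟩
    obtain ⟨O, hO⟩ : ∃ O, O = m.filter (fun l => ¬ Even l) := ⟨_, rfl⟩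
    have hsplit : m = 2 • E + O := by rw [← hE, hO, Multiset.filter_add_not]
    have hOodd : ∀ a ∈ O, ¬ Even a := fun a ha => by
      rw [hO] at ha; exact (Multiset.mem_filter.1 ha).2
    have hO2 : ∀ a ∈ O, 2 ≤ a := fun a ha => hge a (by rw [hsplit]; simp [ha])
    have hE2 : ∀ a ∈ E, 2 ≤ a := fun a ha => hge a (by
      rw [hsplit, two_nsmul]; simp [ha])
    have hsumE : (E.map (2 * ·)).sum = 2 * E.sum := by
      rw [Multiset.sum_map_mul_left, Multiset.map_id']
    have hms : m.sum = 2 * E.sum + O.sum := by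
      rw [hsplit, Multiset.sum_add, Multiset.sum_nsmul, smul_eq_mul]
    have hD2 : ∀ a ∈ E.map (2 * ·), 2 ≤ a := fun a ha => by
      obtain ⟨c, hc, rfl⟩ := Multiset.mem_map.1 ha
      have := hE2 c hc
      omega
    by_cases hpar : Even (Multiset.card E)
    · apply key (E.map (2 * ·) + O)
      · intro a ha
        exact (Multiset.mem_add.1 ha).elim (hD2 a) (hO2 a)
      · rw [Multiset.sum_add, hsumE]; omega
      · rw [evCount_add, evCount_double, evCount_odd O hOodd]; exact hpar
      · rw [Multiset.add_bind, bind_sqLen_double E hE2, bind_sqLen_odd O hOodd, hsplit]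
    · rcases h2 with ha | ⟨l, hl, hcl⟩ | hc
      · apply key (2 ::ₘ (E.map (2 * ·) + O))
        · intro a ha
          rcases Multiset.mem_cons.1 ha with rfl | ha
          · exact le_rfl
          · exact (Multiset.mem_add.1 ha).elim (hD2 a) (hO2 a)
        · rw [Multiset.sum_cons, Multiset.sum_add, hsumE]; omega
        · rw [evCount_cons, evCount_add, evCount_double, evCount_odd O hOodd, if_pos even_two]
          exact odd_one.add_odd (Nat.not_even_iff_odd.1 hpar)
        · rw [Multiset.cons_bind, Multiset.add_bind, bind_sqLen_double E hE2,
            bind_sqLen_odd O hOodd, hsplit]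
          simp [sqLen]
      · have hlO : Multiset.replicate 2 l ≤ O := by
          rw [← Multiset.le_count_iff_replicate_le, hO,
            Multiset.count_filter_of_pos (p := fun l => ¬ Even l) (Nat.not_even_iff_odd.2 hl)]
          exact hcl
        obtain ⟨P, hP⟩ := Multiset.le_iff_exists_add.1 hlO
        have hl2 : 2 ≤ l := hO2 l (by rw [hP]; simp)
        have hPO : ∀ a ∈ P, a ∈ O := fun a ha => by rw [hP]; simp [ha]
        have hOs : O.sum = 2 * l + P.sum := by rw [hP]; simp; omega
        apply key ((2 * l) ::ₘ (E.map (2 * ·) + P))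
        · intro a ha
          rcases Multiset.mem_cons.1 ha with rfl | ha
          · omega
          · exact (Multiset.mem_add.1 ha).elim (hD2 a) (fun h => hO2 a (hPO a h))
        · rw [Multiset.sum_cons, Multiset.sum_add, hsumE]; omega
        · rw [evCount_cons, evCount_add, evCount_double,
            evCount_odd P (fun a h => hOodd a (hPO a h)), if_pos (even_two_mul l)]
          exact odd_one.add_odd (Nat.not_even_iff_odd.1 hpar)
        · rw [Multiset.cons_bind, Multiset.add_bind, bind_sqLen_double E hE2,
            bind_sqLen_odd P (fun a h => hOodd a (hPO a h)), hsplit, hP, sqLen_double l hl2]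
          exact add_left_comm _ _ _
      · rw [hE, Multiset.card_nsmul] at hc
        exact absurd ((even_iff_two_dvd).2 (by omega)) hpar
end

section
/- Let g : Equiv.Perm α be a permutation of a finite type such that for some even natural number l the multiplicity of l in Equiv.Perm.cycleType g is odd. Then g cannot be written as g = h^2 * t^2 with h and t disjoint permutations (Equiv.Perm.Disjoint h t); in particular (taking t = 1), g is not the square of any permutation of α. -/
theorem sq_count_even_aux {α : Type*}
    [Fintype α] [DecidableEq α] (h : Equiv.Perm α) (l : ℕ) (hl : Even l) :
    Even (Multiset.count l (Equiv.Perm.cycleType (h ^ 2))) := by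
  classical
  set g := h ^ 2 with hg
  rw [Equiv.Perm.cycleType_def, Multiset.count_map]
  set s := g.cycleFactorsFinset.filter (fun c => l = c.support.card) with hs
  have hc : (Multiset.filter (fun c => l = (Finset.card ∘ Equiv.Perm.support) c)
      g.cycleFactorsFinset.val).card = s.card := rfl
  rw [hc]
  have hsum : ∑ c ∈ s, (1 : ZMod 2) = 0 := by
    refine Finset.sum_involution (fun c _ => h * c * h⁻¹) ?_ ?_ ?_ ?_
    · intro c _
      decide
    · intro c hcs _ heq
      obtain ⟨hcm, hcl⟩ := Finset.mem_filter.1 hcs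
      obtain ⟨hcyc, hag⟩ := Equiv.Perm.mem_cycleFactorsFinset_iff.1 hcm
      have hcomm : ∀ x, h (c x) = c (h x) := by
        intro x
        have := congrArg (fun p : Equiv.Perm α => p (h x)) heq
        simpa using this
      have hsupp : ∀ x, h x ∈ c.support ↔ x ∈ c.support := by
        intro x
        rw [Equiv.Perm.mem_support, Equiv.Perm.mem_support, ← hcomm, Ne, Ne,
          h.injective.eq_iff]
      have hsq : c = (Equiv.Perm.ofSubtype (h.subtypePerm hsupp)) ^ 2 := by
        rw [← map_pow]
        ext x
        by_cases hx : x ∈ c.support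
        · rw [hag x hx, Equiv.Perm.ofSubtype_apply_of_mem _ hx]
          rw [hg, pow_two, pow_two]
          rfl
        · rw [Equiv.Perm.ofSubtype_apply_of_not_mem _ hx]
          exact Equiv.Perm.notMem_support.1 hx
      have hsign := hcyc.sign
      rw [← hcl, hl.neg_one_pow, hsq, map_pow, Int.units_sq] at hsign
      exact absurd hsign (by decide)
    · intro c hcs
      obtain ⟨hcm, hcl⟩ := Finset.mem_filter.1 hcs
      refine Finset.mem_filter.2 ⟨?_, by rw [hcl, Equiv.Perm.card_support_conj]⟩
      have := (Equiv.Perm.mem_cycleFactorsFinset_conj g h c).2 hcm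
      have h2 : h * g * h⁻¹ = g := by rw [hg]; group
      rwa [h2] at this
    · intro c hcs
      obtain ⟨hcm, hcl⟩ := Finset.mem_filter.1 hcs
      have hcg : c * g = g * c := (Equiv.Perm.self_mem_cycle_factors_commute hcm)
      have : h * (h * c * h⁻¹) * h⁻¹ = g * c * g⁻¹ := by rw [hg, pow_two]; group
      change h * (h * c * h⁻¹) * h⁻¹ = c
      rw [this, ← hcg]
      group
  rw [Finset.sum_const, nsmul_eq_mul, mul_one] at hsum
  exact even_iff_two_dvd.2 ((ZMod.natCast_eq_zero_iff _ _).1 hsum)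

theorem not_prod_of_disjoint_squares_of_odd_even_multiplicity {α : Type*}
    [Fintype α] [DecidableEq α] (g : Equiv.Perm α)
    (hmult : ∃ l : ℕ, Even l ∧ Odd (Multiset.count l (Equiv.Perm.cycleType g))) :
    (¬ ∃ h t : Equiv.Perm α, Equiv.Perm.Disjoint h t ∧ g = h ^ 2 * t ^ 2) ∧
      ¬ ∃ h : Equiv.Perm α, h ^ 2 = g := by
  obtain ⟨l, hl, hodd⟩ := hmult
  have key : ¬ ∃ h : Equiv.Perm α, h ^ 2 = g := by
    rintro ⟨h, rfl⟩
    exact (Nat.not_even_iff_odd.2 hodd) (sq_count_even_aux h l hl)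
  refine ⟨?_, key⟩
  rintro ⟨h, t, hd, rfl⟩
  exact key ⟨h * t, hd.commute.mul_pow 2⟩
end

section
/- Let l ≥ 2 and let π : Equiv.Perm (Fin (2*l)) be a product of two disjoint l-cycles covering all points, i.e. Equiv.Perm.cycleType π = {l, l}. Then the number of square roots of π in the full symmetric group on Fin (2*l) is: Fintype.card {h : Equiv.Perm (Fin (2*l)) // h^2 = π} = l + 1 if l is odd, and = l if l is even. Moreover, when l is odd each root is either a single (2*l)-cycle or a product of two l-cycles, and when l is even each root is a single (2*l)-cycle. -/
namespace SqrtTwoCycles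

open Equiv Equiv.Perm

/-- The model permutation: shift on two copies of `ZMod l`. -/
def shift (l : ℕ) : Perm (ZMod l × Bool) where
  toFun p := (p.1 + 1, p.2)
  invFun p := (p.1 - 1, p.2)
  left_inv p := by simp
  right_inv p := by simp

/-- The root interchanging the two copies. -/
def swapRoot (l : ℕ) (c : ZMod l) : Perm (ZMod l × Bool) where
  toFun p := (p.1 + (if p.2 then 1 - c else c), !p.2)
  invFun p := (p.1 - (if p.2 then c else 1 - c), !p.2)
  left_inv p := by rcases p with ⟨x, b⟩; cases b <;> simp
  right_inv p := by rcases p with ⟨x, b⟩; cases b <;> simp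

/-- The root fixing the two copies. -/
def idRoot (l : ℕ) (c : ZMod l) : Perm (ZMod l × Bool) where
  toFun p := (p.1 + c, p.2)
  invFun p := (p.1 - c, p.2)
  left_inv p := by simp
  right_inv p := by simp

lemma swapRoot_sq (l : ℕ) (c : ZMod l) : swapRoot l c ^ 2 = shift l := by
  ext1 ⟨x, b⟩
  cases b <;> simp [swapRoot, shift, sq] <;> ring

lemma idRoot_sq (l : ℕ) (c : ZMod l) (hc : c + c = 1) : idRoot l c ^ 2 = shift l := by
  ext1 ⟨x, b⟩
  simp [idRoot, shift, sq, add_assoc, hc]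

lemma shift_pow (l : ℕ) (n : ℕ) (p : ZMod l × Bool) : (shift l ^ n) p = (p.1 + n, p.2) := by
  induction n with
  | zero => simp
  | succ n ih => rw [pow_succ', Perm.mul_apply, ih]; simp [shift, add_assoc]

lemma half_unique {l : ℕ} {c d : ZMod l} (hc : c + c = 1) (hd : d + d = 1) : c = d := by
  linear_combination d * hc - c * hd

lemma root_cases {l : ℕ} [NeZero l] (h : Perm (ZMod l × Bool)) (hh : h ^ 2 = shift l) :
    (∃ c, h = swapRoot l c) ∨ (∃ c, c + c = 1 ∧ h = idRoot l c) := by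
  have hcomm (n : ℕ) (p) : h ((shift l ^ n) p) = (shift l ^ n) (h p) := by
    rw [← hh, ← pow_mul, ← Perm.mul_apply, ← Perm.mul_apply, ← pow_succ', ← pow_succ]
  have key (x : ZMod l) (b : Bool) : h (x, b) = ((h (0, b)).1 + x, (h (0, b)).2) := by
    have := hcomm x.val (0, b)
    simpa [shift_pow] using this
  have hsq (b : Bool) : h (h (0, b)) = (1, b) := by
    rw [← Perm.mul_apply, ← sq, hh]; simp [shift]
  obtain ⟨f0, s0, h0⟩ : ∃ f s, h (0, false) = (f, s) := ⟨_, _, rfl⟩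
  obtain ⟨f1, s1, h1⟩ : ∃ f s, h (0, true) = (f, s) := ⟨_, _, rfl⟩
  have k0 := fun x => key x false
  have k1 := fun x => key x true
  have e0 := hsq false
  have e1 := hsq true
  rw [h0] at k0 e0
  rw [h1] at k1 e1
  cases s0 <;> cases s1
  · simp [k0] at e0 e1
  · right
    simp only [k0, k1, Prod.mk.injEq, and_true] at e0 e1
    have := half_unique e0 e1
    subst this
    refine ⟨f0, e0, ?_⟩
    ext1 ⟨x, b⟩
    cases b <;> simp [k0, k1, idRoot, add_comm]
  · left
    simp only [k0, k1, Prod.mk.injEq, and_true] at e0 e1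
    refine ⟨f0, ?_⟩
    ext1 ⟨x, b⟩
    cases b
    · simp [k0, swapRoot, add_comm]
    · simp only [k1, swapRoot, coe_fn_mk, Prod.mk.injEq]
      refine ⟨?_, rfl⟩
      simp only [if_true]
      linear_combination e0
  · simp [k1] at e0 e1

lemma swapRoot_ne_idRoot {l : ℕ} (c d : ZMod l) : swapRoot l c ≠ idRoot l d := by
  intro h
  have := congrArg (fun g => (g (0, false)).2) h
  simp [swapRoot, idRoot] at this

lemma card_half (l : ℕ) [NeZero l] :
    Fintype.card {c : ZMod l // c + c = 1} = if Odd l then 1 else 0 := by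
  split_ifs with ho
  · rw [Fintype.card_eq_one_iff]
    obtain ⟨k, hk⟩ := ho
    have h1 : ((k + 1 : ℕ) : ZMod l) + ((k + 1 : ℕ) : ZMod l) = 1 := by
      have : ((2 * k + 1 : ℕ) : ZMod l) = 0 := by rw [← hk]; simp
      push_cast at this ⊢
      linear_combination this
    exact ⟨⟨_, h1⟩, fun y => Subtype.ext (half_unique y.2 h1)⟩
  · rw [Fintype.card_eq_zero_iff]
    refine ⟨fun ⟨c, hc⟩ => ?_⟩
    have h2 : 2 ∣ l := (Nat.not_odd_iff_even.mp ho).two_dvd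
    have := congrArg (ZMod.castHom h2 (ZMod 2)) hc
    rw [map_add, map_one, CharTwo.add_self_eq_zero] at this
    exact absurd this (by decide)

lemma card_roots (l : ℕ) [NeZero l] :
    Nat.card {h : Perm (ZMod l × Bool) // h ^ 2 = shift l} = if Odd l then l + 1 else l := by
  let F : ZMod l ⊕ {c : ZMod l // c + c = 1} → {h : Perm (ZMod l × Bool) // h ^ 2 = shift l} :=
    Sum.elim (fun c => ⟨swapRoot l c, swapRoot_sq l c⟩) (fun c => ⟨idRoot l c, idRoot_sq l c c.2⟩)
  have hF : Function.Bijective F := by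
    constructor
    · rintro (c | c) (d | d) h
      · have := congrArg (fun g => (g.1 (0, false)).1) h
        simpa [F, swapRoot] using this
      · exact absurd (congrArg Subtype.val h) (swapRoot_ne_idRoot _ _)
      · exact absurd (congrArg Subtype.val h).symm (swapRoot_ne_idRoot _ _)
      · exact congrArg _ (Subtype.ext (half_unique c.2 d.2))
    · rintro ⟨h, hh⟩
      rcases root_cases h hh with ⟨c, rfl⟩ | ⟨c, hc, rfl⟩
      · exact ⟨Sum.inl c, rfl⟩
      · exact ⟨Sum.inr ⟨c, hc⟩, rfl⟩
  rw [← Nat.card_congr (Equiv.ofBijective F hF), Nat.card_eq_fintype_card, Fintype.card_sum,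
    card_half, ZMod.card]
  split_ifs <;> rfl

/-- A permutation of cycle type `{l, l}` on `2 * l` points is a relabelled `shift`. -/
lemma exists_model (l : ℕ) [NeZero l] (hl : 2 ≤ l) (π : Perm (Fin (2 * l)))
    (hπ : cycleType π = {l, l}) :
    ∃ e : ZMod l × Bool ≃ Fin (2 * l), e.permCongr (shift l) = π := by
  have hsupp : π.support = Finset.univ := by
    rw [← Finset.card_eq_iff_eq_univ, ← sum_cycleType, hπ]
    simp [two_mul]
  have hmem (x) : π x ≠ x := by
    rw [← mem_support, hsupp]; simp
  have hcard (x) : (π.cycleOf x).support.card = l := by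
    have h1 : π.cycleOf x ∈ π.cycleFactorsFinset := by
      rw [cycleOf_mem_cycleFactorsFinset_iff, hsupp]; simp
    have : (π.cycleOf x).support.card ∈ π.cycleType := by
      rw [cycleType_def]
      exact Multiset.mem_map_of_mem _ h1
    rw [hπ] at this
    simpa using this
  have hpow (x) (m n : ℕ) : (π ^ m) x = (π ^ n) x ↔ m ≡ n [MOD l] := by
    have := (isCycleOn_support_cycleOf π x).pow_apply_eq_pow_apply (m := m) (n := n) (a := x)
      (by rw [mem_support_cycleOf_iff]; exact ⟨SameCycle.refl _ _, by rw [mem_support]; exact hmem x⟩)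
    rwa [hcard] at this
  let a : Fin (2 * l) := ⟨0, by omega⟩
  obtain ⟨b, hb⟩ : ∃ b, ¬ SameCycle π a b := by
    by_contra! hcon
    have : π.IsCycle := ⟨a, hmem a, fun y _ => hcon y⟩
    rw [← card_cycleType_eq_one, hπ] at this
    simp at this
  let f : ZMod l × Bool → Fin (2 * l) := fun p => (π ^ p.1.val) (if p.2 then b else a)
  have hf : Function.Bijective f := by
    rw [Fintype.bijective_iff_injective_and_card]
    refine ⟨?_, by simp [ZMod.card, mul_comm]⟩
    have hne (m n : ℕ) : (π ^ m) a ≠ (π ^ n) b := by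
      intro h
      apply hb
      have h1 : SameCycle π a ((π ^ m) a) := ⟨m, by simp⟩
      have h2 : SameCycle π b ((π ^ n) b) := ⟨n, by simp⟩
      rw [h] at h1
      exact h1.trans h2.symm
    have hval (x y : ZMod l) (h : x.val ≡ y.val [MOD l]) : x = y := by
      have := (ZMod.natCast_eq_natCast_iff _ _ _).2 h
      simpa using this
    rintro ⟨x, i⟩ ⟨y, j⟩ h
    cases i <;> cases j <;> simp only [f, if_true, Bool.false_eq_true, if_false] at h
    · rw [hval x y ((hpow _ _ _).1 h)]
    · exact absurd h (hne _ _)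
    · exact absurd h.symm (hne _ _)
    · rw [hval x y ((hpow _ _ _).1 h)]
  refine ⟨Equiv.ofBijective f hf, ?_⟩
  ext1 x
  obtain ⟨⟨k, i⟩, rfl⟩ := (Equiv.ofBijective f hf).surjective x
  rw [Equiv.permCongr_apply, Equiv.symm_apply_apply]
  change (π ^ (k + 1).val) (if i then b else a) = π ((π ^ k.val) (if i then b else a))
  rw [← Perm.mul_apply, ← pow_succ', hpow, ← ZMod.natCast_eq_natCast_iff]
  simp

lemma cycleType_idRoot {l : ℕ} (e : ZMod l × Bool ≃ Fin (2 * l)) (c : ZMod l) (hc : c + c = 1) :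
    cycleType (e.permCongr (idRoot l c)) = cycleType (e.permCongr (shift l)) := by
  let M : Perm (ZMod l × Bool) :=
    { toFun := fun p => (c * p.1, p.2)
      invFun := fun p => (2 * p.1, p.2)
      left_inv := fun p => Prod.ext (by linear_combination p.1 * hc) rfl
      right_inv := fun p => Prod.ext (by linear_combination p.1 * hc) rfl }
  have : e.permCongr (idRoot l c) * e.permCongr M = e.permCongr M * e.permCongr (shift l) := by
    ext1 x
    simp [M, idRoot, shift, mul_add]
  rw [← cycleType_conj (σ := e.permCongr (shift l)) (τ := e.permCongr M), ← this,
    mul_inv_cancel_right]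

lemma cycleType_swapRoot {l : ℕ} [NeZero l] (hl : 2 ≤ l) (e : ZMod l × Bool ≃ Fin (2 * l))
    (c : ZMod l) : cycleType (e.permCongr (swapRoot l c)) = {2 * l} := by
  set h := e.permCongr (swapRoot l c) with hh
  have happ (p) : h (e p) = e (swapRoot l c p) := by simp [hh]
  have hpow (n : ℕ) (p) : (h ^ n) (e p) = e ((swapRoot l c ^ n) p) := by
    induction n with
    | zero => simp
    | succ n ih => rw [pow_succ', Perm.mul_apply, ih, happ, pow_succ', Perm.mul_apply]
  have hne (x) : h x ≠ x := by
    obtain ⟨⟨k, i⟩, rfl⟩ := e.surjective x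
    rw [happ]
    intro h
    have := congrArg Prod.snd (e.injective h)
    simp [swapRoot] at this
  have hcyc : h.IsCycle := by
    refine ⟨e (0, false), hne _, fun y _ => ?_⟩
    obtain ⟨⟨k, i⟩, rfl⟩ := e.surjective y
    cases i
    · refine ⟨((2 * k.val : ℕ) : ℤ), ?_⟩
      rw [zpow_natCast, hpow, pow_mul, swapRoot_sq, shift_pow]
      simp
    · refine ⟨((2 * (k - c).val + 1 : ℕ) : ℤ), ?_⟩
      rw [zpow_natCast, hpow, pow_succ', pow_mul, swapRoot_sq, Perm.mul_apply, shift_pow]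
      simp [swapRoot]
  rw [hcyc.cycleType]
  have : h.support = Finset.univ := by
    ext x; simp [hne]
  rw [this]; simp

end SqrtTwoCycles

theorem card_sqrt_of_two_l_cycles (l : ℕ) (hl : 2 ≤ l)
    (π : Equiv.Perm (Fin (2 * l))) (hπ : Equiv.Perm.cycleType π = {l, l}) :
    (Fintype.card {h : Equiv.Perm (Fin (2 * l)) // h ^ 2 = π} =
        if Odd l then l + 1 else l) ∧
      (∀ h : Equiv.Perm (Fin (2 * l)), h ^ 2 = π →
        (Odd l → Equiv.Perm.cycleType h = {2 * l} ∨ Equiv.Perm.cycleType h = {l, l}) ∧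
        (Even l → Equiv.Perm.cycleType h = {2 * l})) := by
  haveI : NeZero l := ⟨by omega⟩
  obtain ⟨e, rfl⟩ := SqrtTwoCycles.exists_model l hl π hπ
  have hiff (g : Equiv.Perm (ZMod l × Bool)) :
      g ^ 2 = SqrtTwoCycles.shift l ↔
        (e.permCongr g) ^ 2 = e.permCongr (SqrtTwoCycles.shift l) := by
    rw [sq, sq, ← Equiv.permCongr_mul, e.permCongr.injective.eq_iff]
  constructor
  · rw [← Nat.card_eq_fintype_card, ← SqrtTwoCycles.card_roots l]
    exact (Nat.card_congr (e.permCongr.subtypeEquiv hiff)).symm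
  · intro h hh
    obtain ⟨g, rfl⟩ := e.permCongr.surjective h
    rw [← hiff] at hh
    rcases SqrtTwoCycles.root_cases g hh with ⟨c, rfl⟩ | ⟨c, hc, rfl⟩
    · have := SqrtTwoCycles.cycleType_swapRoot hl e c
      exact ⟨fun _ => Or.inl this, fun _ => this⟩
    · refine ⟨fun _ => Or.inr ?_, fun he => ?_⟩
      · rw [SqrtTwoCycles.cycleType_idRoot e c hc, hπ]
      · exfalso
        have h0 := SqrtTwoCycles.card_half l
        rw [if_neg (Nat.not_odd_iff_even.mpr he), Fintype.card_eq_zero_iff] at h0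
        exact h0.false ⟨c, hc⟩
end

section
/- Let n, k, m, a, b be natural numbers with k ≥ 1, m ≥ 1, a ≥ 1, b ≥ 1, and let g be an element of alternatingGroup (Fin n) whose cycle type consists only of cycles of the two even lengths 2*k and 2*m, namely Equiv.Perm.cycleType g = Multiset.replicate a (2*k) + Multiset.replicate b (2*m). Then g is a product of two squares from the alternating group: there exist h and t in alternatingGroup (Fin n) with g = h^2 * t^2. -/
open Equiv Equiv.Perm in
theorem aux_append {α : Type*} [DecidableEq α] (l : List α) (b : α) (bs : List α) :
    (l ++ b :: bs).formPerm = (l ++ [b]).formPerm * (b :: bs).formPerm := by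
  induction l with
  | nil => simp
  | cons x l ih =>
    cases l with
    | nil => simp [List.formPerm_cons_cons]
    | cons y l =>
      simp only [List.cons_append, List.formPerm_cons_cons] at ih ⊢
      rw [ih, mul_assoc]

open Equiv Equiv.Perm in
theorem aux_lists {α : Type*} [DecidableEq α] (x y : α) (l : List α) (b : α) (bs : List α)
    (h : (x :: y :: l ++ b :: bs).Nodup) :
    (x :: y :: l).formPerm * (b :: bs).formPerm =
      [b, x, y].formPerm * (y :: l ++ b :: bs).formPerm := by
  have h1 := aux_append (x :: y :: l) b bs
  have hn : (b :: x :: y :: l).Nodup := by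
    simp only [List.cons_append, List.nodup_cons, List.nodup_append, List.mem_cons,
      List.mem_append] at h ⊢
    grind
  have h2 := List.formPerm_rotate_one _ hn
  have h3 : (b :: x :: y :: l).rotate 1 = x :: y :: l ++ [b] := by simp
  rw [h3, List.formPerm_cons_cons b x] at h2
  rw [h2] at h1
  have h4 : (x :: y :: l ++ b :: bs).formPerm = swap x y * (y :: l ++ b :: bs).formPerm := rfl
  rw [h4] at h1
  have h5 : [b, x, y].formPerm = swap b x * swap x y := by simp [List.formPerm_cons_cons]
  rw [h5, mul_assoc, h1, ← mul_assoc, ← mul_assoc, swap_mul_self, one_mul]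

open Equiv Equiv.Perm in
theorem aux_cycle {α : Type*} [DecidableEq α] [Fintype α] (c : Perm α) (hc : c.IsCycle) :
    ∃ l : List α, l.Nodup ∧ l.formPerm = c ∧ l.length = c.support.card ∧
      ∀ z ∈ l, z ∈ c.support := by
  obtain ⟨x, hx, -⟩ := id hc
  refine ⟨toList c x, nodup_toList c x, ?_, ?_, ?_⟩
  · rw [formPerm_toList, hc.cycleOf_eq hx]
  · rw [length_toList, hc.cycleOf_eq hx]
  · intro z hz
    rw [mem_toList_iff] at hz
    exact hz.1.mem_support_iff.1 hz.2

open Equiv Equiv.Perm in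
theorem aux_pair {α : Type*} [DecidableEq α] [Fintype α] (c d : Perm α) (hc : c.IsCycle)
    (hd : d.IsCycle) (hcd : c.Disjoint d) (hce : Even c.support.card)
    (hde : Even d.support.card) :
    ∃ x y : Perm α, c * d = x * y ∧ (∃ r, Odd r ∧ x ^ r = 1) ∧ (∃ r, Odd r ∧ y ^ r = 1) ∧
      x.support ≤ (c * d).support ∧ y.support ≤ (c * d).support := by
  obtain ⟨l1, hn1, hf1, hl1, hm1⟩ := aux_cycle c hc
  obtain ⟨l2, hn2, hf2, hl2, hm2⟩ := aux_cycle d hd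
  have hc2 := hc.two_le_card_support
  have hd2 := hd.two_le_card_support
  have hdis := hcd.disjoint_support
  rw [Finset.disjoint_left] at hdis
  rcases l1 with _ | ⟨x, _ | ⟨y, l⟩⟩
  · simp at hl1; omega
  · simp at hl1; omega
  rcases l2 with _ | ⟨b, bs⟩
  · simp at hl2; omega
  have hn : (x :: y :: l ++ b :: bs).Nodup :=
    List.nodup_append.2 ⟨hn1, hn2, fun u hu v hv huv =>
      hdis (hm1 u hu) (huv ▸ hm2 v hv)⟩
  have hsub : ∀ z ∈ x :: y :: l ++ b :: bs, z ∈ (c * d).support := by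
    intro z hz
    rw [hcd.support_mul, Finset.mem_union]
    rcases List.mem_append.1 hz with hz | hz
    · exact Or.inl (hm1 z hz)
    · exact Or.inr (hm2 z hz)
  have hn3 : [b, x, y].Nodup := by
    simp only [List.cons_append, List.nodup_cons, List.nodup_append, List.mem_cons,
      List.mem_append] at hn ⊢
    grind
  refine ⟨[b, x, y].formPerm, (y :: l ++ b :: bs).formPerm, ?_, ⟨3, by decide, ?_⟩,
    ⟨(y :: l ++ b :: bs).length, ?_, ?_⟩, ?_, ?_⟩
  · rw [← hf1, ← hf2]; exact aux_lists x y l b bs hn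
  · exact List.formPerm_pow_length_eq_one_of_nodup _ hn3
  · rw [← hl1] at hce
    rw [← hl2] at hde
    simp only [List.length_cons, List.length_append] at hce hde ⊢
    grind
  · exact List.formPerm_pow_length_eq_one_of_nodup _ (List.nodup_cons.1 hn).2
  · intro z hz
    have := List.support_formPerm_le _ hz
    apply hsub
    simp at this ⊢
    tauto
  · intro z hz
    have := List.support_formPerm_le _ hz
    apply hsub
    simp at this ⊢
    tauto

open Equiv Equiv.Perm in
theorem aux_split {α : Type*} [DecidableEq α] [Fintype α] (g : Perm α)
    (hg : 0 < g.cycleType.card) :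
    ∃ g' c : Perm α, g = g' * c ∧ g'.Disjoint c ∧ c.IsCycle ∧
      g.cycleType = g'.cycleType + {c.support.card} := by
  have : g.cycleFactorsFinset.Nonempty := by
    rw [Finset.nonempty_iff_ne_empty, ne_eq, cycleFactorsFinset_eq_empty_iff]
    rintro rfl
    simp at hg
  obtain ⟨c, hc⟩ := this
  have hcy : c.IsCycle := (mem_cycleFactorsFinset_iff.1 hc).1
  have hd := disjoint_mul_inv_of_mem_cycleFactorsFinset hc
  refine ⟨g * c⁻¹, c, by simp, hd, hcy, ?_⟩
  rw [← hcy.cycleType, ← hd.cycleType_mul]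
  simp

open Equiv Equiv.Perm in
theorem aux_oddmul {G : Type*} [Monoid G] (x y : G) (h : Commute x y)
    (hx : ∃ r, Odd r ∧ x ^ r = 1) (hy : ∃ r, Odd r ∧ y ^ r = 1) :
    ∃ r, Odd r ∧ (x * y) ^ r = 1 := by
  obtain ⟨r, hr, hr1⟩ := hx
  obtain ⟨s, hs, hs1⟩ := hy
  refine ⟨r * s, hr.mul hs, ?_⟩
  rw [h.mul_pow, pow_mul, hr1, mul_comm, pow_mul, hs1]
  simp

open Equiv Equiv.Perm in
theorem aux_main {α : Type*} [DecidableEq α] [Fintype α] (r : ℕ) : ∀ g : Perm α,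
    g.cycleType.card = 2 * r → (∀ i ∈ g.cycleType, Even i) →
    ∃ x y : Perm α, g = x * y ∧ (∃ r, Odd r ∧ x ^ r = 1) ∧ (∃ r, Odd r ∧ y ^ r = 1) ∧
      x.support ≤ g.support ∧ y.support ≤ g.support := by
  induction r with
  | zero =>
    intro g hg _
    have : g = 1 := by simpa using hg
    subst this
    exact ⟨1, 1, by simp, ⟨1, by simp⟩, ⟨1, by simp⟩, le_rfl, le_rfl⟩
  | succ r ih =>
    intro g hg he
    obtain ⟨g1, c, hgc, hd1, hc, ht1⟩ := aux_split g (by omega)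
    have hk1 : g1.cycleType.card = 2 * r + 1 := by
      rw [ht1] at hg; simp at hg; omega
    obtain ⟨g2, d, hgd, hd2, hd, ht2⟩ := aux_split g1 (by omega)
    have hk2 : g2.cycleType.card = 2 * r := by
      rw [ht2] at hk1; simp at hk1; omega
    rw [ht1, ht2] at he
    obtain ⟨x, y, hxy, hx, hy, hsx, hsy⟩ := ih g2 hk2 (fun i hi => he i (by simp [hi]))
    have hs1 := hd2.support_mul
    rw [← hgd] at hs1
    have hcd : d.Disjoint c := hd1.mono (by rw [hs1]; exact Finset.subset_union_right) le_rfl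
    have hg2c : g2.Disjoint c := hd1.mono (by rw [hs1]; exact Finset.subset_union_left) le_rfl
    have hbig : g2.Disjoint (d * c) := hd2.mul_right hg2c
    obtain ⟨u, v, huv, hu, hv, hsu, hsv⟩ := aux_pair d c hd hc hcd (he _ (by simp)) (he _ (by simp))
    have hgeq : g = g2 * (d * c) := by rw [hgc, hgd, mul_assoc]
    have hsg : g.support = g2.support ∪ (d * c).support := by rw [hgeq, hbig.support_mul]
    have hyu : Commute y u := (hbig.mono hsy hsu).commute
    refine ⟨x * u, y * v, ?_, aux_oddmul _ _ (hbig.mono hsx hsu).commute hx hu,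
      aux_oddmul _ _ (hbig.mono hsy hsv).commute hy hv, ?_, ?_⟩
    · rw [hgeq, huv, hxy, mul_assoc, mul_assoc, ← mul_assoc y, hyu.eq, mul_assoc]
    · rw [hsg]; exact (support_mul_le x u).trans (sup_le_sup hsx hsu)
    · rw [hsg]; exact (support_mul_le y v).trans (sup_le_sup hsy hsv)

open Equiv Equiv.Perm in
theorem aux_square {n : ℕ} (x : Perm (Fin n)) (hx : ∃ r, Odd r ∧ x ^ r = 1) :
    ∃ h : alternatingGroup (Fin n), x = ((h : Perm (Fin n))) ^ 2 := by
  obtain ⟨r, ⟨s, rfl⟩, h1⟩ := hx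
  have hs : sign x = 1 := by
    have h2 := congrArg sign h1
    rw [map_pow, map_one] at h2
    rcases Int.units_eq_one_or (sign x) with h | h
    · exact h
    · rw [h, Odd.neg_one_pow ⟨s, rfl⟩] at h2
      exact absurd h2 (by decide)
  refine ⟨⟨x ^ (s + 1), ?_⟩, ?_⟩
  · rw [mem_alternatingGroup, map_pow, hs, one_pow]
  · show x = (x ^ (s + 1)) ^ 2
    rw [← pow_mul, show (s + 1) * 2 = (2 * s + 1) + 1 by ring, pow_succ, h1, one_mul]

theorem even_cycle_type_is_product_of_two_squares (n k m a b : ℕ)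
    (hk : 1 ≤ k) (hm : 1 ≤ m) (ha : 1 ≤ a) (hb : 1 ≤ b)
    (g : alternatingGroup (Fin n))
    (hg : Equiv.Perm.cycleType (g : Equiv.Perm (Fin n)) =
      Multiset.replicate a (2 * k) + Multiset.replicate b (2 * m)) :
    ∃ h t : alternatingGroup (Fin n), g = h ^ 2 * t ^ 2 := by
  have hev : Even (a + b) := by
    have h1 : Equiv.Perm.sign (g : Equiv.Perm (Fin n)) = 1 :=
      Equiv.Perm.mem_alternatingGroup.1 g.2
    rw [Equiv.Perm.sign_of_cycleType, hg] at h1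
    by_contra hodd
    rw [Nat.not_even_iff_odd] at hodd
    rw [Odd.neg_one_pow] at h1
    · exact absurd h1 (by decide)
    · simp only [Multiset.sum_add, Multiset.sum_replicate, Multiset.card_add,
        Multiset.card_replicate, smul_eq_mul]
      refine Even.add_odd ?_ hodd
      exact ⟨a * k + b * m, by ring⟩
  obtain ⟨r, hr⟩ := hev
  obtain ⟨x, y, hxy, hx, hy, -, -⟩ := aux_main r (g : Equiv.Perm (Fin n))
    (by rw [hg]; simp; omega)
    (by
      rw [hg]
      intro i hi
      rcases Multiset.mem_add.1 hi with hi | hi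
      · rw [Multiset.eq_of_mem_replicate hi]; exact even_two_mul k
      · rw [Multiset.eq_of_mem_replicate hi]; exact even_two_mul m)
  obtain ⟨h, hh⟩ := aux_square x hx
  obtain ⟨t, ht⟩ := aux_square y hy
  refine ⟨h, t, Subtype.ext ?_⟩
  rw [hxy, hh, ht]
  rfl
end

section
/- For every n ≥ 4 the set of squares in the alternating group is not closed under multiplication: there exist elements g₁ and g₂ of alternatingGroup (Fin n) such that g₁ = h₁^2 and g₂ = h₂^2 for some h₁, h₂ in alternatingGroup (Fin n), but there is no h in alternatingGroup (Fin n) with h^2 = g₁ * g₂. -/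
open Equiv Equiv.Perm in
/-- Reduction: it suffices to give even `a`, `b` with `a ^ 2 * b ^ 2` not an even square. -/
theorem squares_aux {n : ℕ} (a b : Perm (Fin n)) (ha : sign a = 1) (hb : sign b = 1)
    (h : ∀ c : Perm (Fin n), sign c = 1 → c ^ 2 ≠ a ^ 2 * b ^ 2) :
    ∃ g₁ g₂ : alternatingGroup (Fin n),
      (∃ h₁ : alternatingGroup (Fin n), g₁ = h₁ ^ 2) ∧
      (∃ h₂ : alternatingGroup (Fin n), g₂ = h₂ ^ 2) ∧
      ¬ ∃ h : alternatingGroup (Fin n), h ^ 2 = g₁ * g₂ := by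
  refine ⟨⟨a, mem_alternatingGroup.2 ha⟩ ^ 2, ⟨b, mem_alternatingGroup.2 hb⟩ ^ 2,
    ⟨_, rfl⟩, ⟨_, rfl⟩, ?_⟩
  rintro ⟨c, hc⟩
  exact h c (mem_alternatingGroup.1 c.2) (congrArg Subtype.val hc)

open Equiv Equiv.Perm in
/-- On at least six points: a square of cycle type `(2, 4)` is impossible. -/
theorem squares_six {n : ℕ} (f : Fin 6 ↪ Fin n) :
    ∃ g₁ g₂ : alternatingGroup (Fin n),
      (∃ h₁ : alternatingGroup (Fin n), g₁ = h₁ ^ 2) ∧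
      (∃ h₂ : alternatingGroup (Fin n), g₂ = h₂ ^ 2) ∧
      ¬ ∃ h : alternatingGroup (Fin n), h ^ 2 = g₁ * g₂ := by
  let a : Perm (Fin 6) := c[1, 5, 2, 4, 3]
  let b : Perm (Fin 6) := c[0, 5, 4, 1, 3]
  refine squares_aux (a.viaFintypeEmbedding f) (b.viaFintypeEmbedding f)
    (by rw [viaFintypeEmbedding_sign]; decide) (by rw [viaFintypeEmbedding_sign]; decide) ?_
  intro c _ hc
  have hin : ∀ i, c (c (f i)) = f ((a ^ 2 * b ^ 2) i) := by
    intro i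
    have := congrArg (fun p : Perm (Fin n) => p (f i)) hc
    simpa [pow_two, viaFintypeEmbedding_apply_image] using this
  have hout : ∀ x, x ∉ Set.range f → c (c x) = x := by
    intro x hx
    have := congrArg (fun p : Perm (Fin n) => p x) hc
    simpa [pow_two, viaFintypeEmbedding_apply_notMem_range _ _ hx] using this
  have h0 : c (c (f 0)) = f 1 := (hin 0).trans (congrArg f (by decide))
  have h1 : c (c (f 1)) = f 0 := (hin 1).trans (congrArg f (by decide))
  have hne : f 0 ≠ f 1 := fun h => absurd (f.injective h) (by decide)
  -- the point `c (f 0)` is moved by `c ^ 2` and fixed by `c ^ 4`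
  have hm : c (c (c (f 0))) ≠ c (f 0) := by
    rw [h0]; exact fun h => hne (c.injective h).symm
  have hf : c (c (c (c (c (f 0))))) = c (f 0) := by rw [h0, h1]
  by_cases hx : c (f 0) ∈ Set.range f
  · obtain ⟨i, hi⟩ := hx
    rw [← hi, hin, hin] at hf
    have hi' : ∀ i : Fin 6, (a ^ 2 * b ^ 2) ((a ^ 2 * b ^ 2) i) = i → i = 0 ∨ i = 1 := by
      set_option maxRecDepth 10000 in decide
    rcases hi' i (f.injective hf) with rfl | rfl
    · rw [← hi, ← hi] at h0
      exact hne (by rw [← h0])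
    · rw [← hi] at h0
      exact hne (c.injective (hi.symm.trans h0.symm))
  · exact hm (hout _ hx)

theorem squares_not_closed_in_alternating_group (n : ℕ) (hn : 4 ≤ n) :
    ∃ g₁ g₂ : alternatingGroup (Fin n),
      (∃ h₁ : alternatingGroup (Fin n), g₁ = h₁ ^ 2) ∧
      (∃ h₂ : alternatingGroup (Fin n), g₂ = h₂ ^ 2) ∧
      ¬ ∃ h : alternatingGroup (Fin n), h ^ 2 = g₁ * g₂ := by
  rcases Nat.lt_or_ge n 6 with h | h
  · obtain rfl | rfl : n = 4 ∨ n = 5 := by omega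
    · exact squares_aux c[0, 2, 1] c[1, 3, 2] (by decide) (by decide) (by decide +kernel)
    · exact squares_aux c[0, 2, 1] c[1, 3, 2] (by decide) (by decide) (by decide +kernel)
  · exact squares_six (Fin.castLEEmb h)
end

section
/- Criterion for square roots in SL(2, F_p): let p be an odd prime and let A be an element of Matrix.SpecialLinearGroup (Fin 2) (ZMod p) whose underlying matrix is semisimple, i.e. the minimal polynomial minpoly (ZMod p) (A : Matrix (Fin 2) (Fin 2) (ZMod p)) is squarefree. Then there exists B in Matrix.SpecialLinearGroup (Fin 2) (ZMod p) with B^2 = A if and only if IsSquare (Matrix.trace (A : Matrix (Fin 2) (Fin 2) (ZMod p)) + 2) holds in ZMod p. -/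
theorem sqrt_criterion_SL2 (p : ℕ) [Fact p.Prime] (hp : p ≠ 2)
    (A : Matrix.SpecialLinearGroup (Fin 2) (ZMod p))
    (hA : Squarefree (minpoly (ZMod p) (A : Matrix (Fin 2) (Fin 2) (ZMod p)))) :
    (∃ B : Matrix.SpecialLinearGroup (Fin 2) (ZMod p), B ^ 2 = A) ↔
      IsSquare (Matrix.trace (A : Matrix (Fin 2) (Fin 2) (ZMod p)) + 2) := by
  have hA_ss := hA
  clear hA
  have key : ∀ M : Matrix (Fin 2) (Fin 2) (ZMod p), M.det = 1 → M * M = M.trace • M - 1 := by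
    intro M hM
    rw [Matrix.det_fin_two] at hM
    ext i j
    fin_cases i <;> fin_cases j <;>
      simp [Matrix.mul_apply, Fin.sum_univ_two, Matrix.trace_fin_two] <;>
      first | ring1 | linear_combination -hM | linear_combination hM
  have lift : ∀ M : Matrix (Fin 2) (Fin 2) (ZMod p), M.det = 1 →
      M ^ 2 = (A : Matrix (Fin 2) (Fin 2) (ZMod p)) →
      ∃ B : Matrix.SpecialLinearGroup (Fin 2) (ZMod p), B ^ 2 = A := fun M h hM =>
    ⟨⟨M, h⟩, Subtype.ext ((Matrix.SpecialLinearGroup.coe_pow ⟨M, h⟩ 2).trans hM)⟩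
  constructor
  · rintro ⟨B, rfl⟩
    refine ⟨Matrix.trace (B : Matrix (Fin 2) (Fin 2) (ZMod p)), ?_⟩
    have h := key B B.det_coe
    rw [Matrix.SpecialLinearGroup.coe_pow, pow_two, h, Matrix.trace_sub, Matrix.trace_smul]
    simp
  · rintro ⟨t, ht⟩
    have hA := key A A.det_coe
    by_cases h0 : t = 0
    · have htr : Matrix.trace (A : Matrix (Fin 2) (Fin 2) (ZMod p)) = -2 := by
        subst h0
        linear_combination ht
      have hsq : ((A : Matrix (Fin 2) (Fin 2) (ZMod p)) + 1) ^ 2 = 0 := by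
        rw [htr] at hA
        have : ((A : Matrix (Fin 2) (Fin 2) (ZMod p)) + 1) ^ 2
            = (A : Matrix (Fin 2) (Fin 2) (ZMod p)) * A + (2 : ZMod p) • (A : Matrix (Fin 2) (Fin 2) (ZMod p)) + 1 := by
          rw [two_smul]
          noncomm_ring
        rw [this, hA]
        module
      have hd : minpoly (ZMod p) (A : Matrix (Fin 2) (Fin 2) (ZMod p)) ∣ (Polynomial.X + 1) ^ 2 := by
        apply minpoly.dvd
        simpa using hsq
      have hd1 := hA_ss.isRadical _ _ hd
      have hA1 : (A : Matrix (Fin 2) (Fin 2) (ZMod p)) + 1 = 0 := by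
        have := (minpoly.dvd_iff).1 hd1
        simpa using this
      have hA2 := eq_neg_of_add_eq_zero_left hA1
      refine lift !![0, 1; -1, 0] (by simp [Matrix.det_fin_two]) ?_
      rw [hA2]
      ext i j
      fin_cases i <;> fin_cases j <;> simp [pow_two, Matrix.mul_apply, Fin.sum_univ_two]
    · have hdet : (t⁻¹ • ((A : Matrix (Fin 2) (Fin 2) (ZMod p)) + 1)).det = 1 := by
        have hd := A.det_coe
        rw [Matrix.det_fin_two] at hd
        rw [Matrix.trace_fin_two] at ht
        rw [Matrix.det_smul, Matrix.det_fin_two]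
        simp
        field_simp
        linear_combination hd + ht
      refine lift _ hdet ?_
      change (t⁻¹ • ((A : Matrix (Fin 2) (Fin 2) (ZMod p)) + 1)) ^ 2 = (A : Matrix (Fin 2) (Fin 2) (ZMod p))
      have h1 : ((A : Matrix (Fin 2) (Fin 2) (ZMod p)) + 1) ^ 2
          = (t * t) • (A : Matrix (Fin 2) (Fin 2) (ZMod p)) := by
        have : ((A : Matrix (Fin 2) (Fin 2) (ZMod p)) + 1) ^ 2
            = (A : Matrix (Fin 2) (Fin 2) (ZMod p)) * A + (2 : ZMod p) • (A : Matrix (Fin 2) (Fin 2) (ZMod p)) + 1 := by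
          rw [two_smul]
          noncomm_ring
        rw [this, hA, ← ht]
        module
      rw [smul_pow, h1, smul_smul]
      have : t⁻¹ ^ 2 * (t * t) = 1 := by field_simp
      rw [this, one_smul]
end

section
/- Criterion for square roots in GL(2, F_p): let p be an odd prime and let A be an invertible 2×2 matrix over ZMod p (an element of the units of the matrix ring, equivalently of Matrix.GeneralLinearGroup (Fin 2) (ZMod p)) whose underlying matrix is semisimple, i.e. minpoly (ZMod p) A is squarefree. Then there exists an invertible 2×2 matrix B over ZMod p with B^2 = A if and only if there exists δ : ZMod p with δ^2 = Matrix.det A and IsSquare (Matrix.trace A + 2 * δ). -/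
theorem sqrt_criterion_GL2 (p : ℕ) [Fact p.Prime] (hp : p ≠ 2)
    (A : Matrix.GeneralLinearGroup (Fin 2) (ZMod p))
    (hA : Squarefree (minpoly (ZMod p) (A : Matrix (Fin 2) (Fin 2) (ZMod p)))) :
    (∃ B : Matrix.GeneralLinearGroup (Fin 2) (ZMod p), B ^ 2 = A) ↔
      ∃ δ : ZMod p, δ ^ 2 = Matrix.det (A : Matrix (Fin 2) (Fin 2) (ZMod p)) ∧
        IsSquare (Matrix.trace (A : Matrix (Fin 2) (Fin 2) (ZMod p)) + 2 * δ) := by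
  constructor
  · rintro ⟨B, rfl⟩
    refine ⟨Matrix.det (B : Matrix (Fin 2) (Fin 2) (ZMod p)), ?_,
      Matrix.trace (B : Matrix (Fin 2) (Fin 2) (ZMod p)), ?_⟩
    · rw [Units.val_pow_eq_pow_val, Matrix.det_pow]
    · rw [Units.val_pow_eq_pow_val, pow_two, Matrix.trace_fin_two, Matrix.trace_fin_two,
        Matrix.det_fin_two]
      simp only [Matrix.mul_apply, Fin.sum_univ_two]
      ring
  · rintro ⟨δ, hd, τ, ht⟩
    suffices h : ∃ M : Matrix (Fin 2) (Fin 2) (ZMod p),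
        M ^ 2 = (A : Matrix (Fin 2) (Fin 2) (ZMod p)) by
      obtain ⟨M, hM⟩ := h
      have hu : IsUnit M := by
        rw [← isUnit_pow_iff (two_ne_zero), hM]
        exact A.isUnit
      obtain ⟨B, rfl⟩ := hu
      exact ⟨B, Units.ext (by rw [Units.val_pow_eq_pow_val, hM])⟩
    generalize (A : Matrix (Fin 2) (Fin 2) (ZMod p)) = N at *
    -- (N + δ)² = τ² N by Cayley-Hamilton
    have key : (N + Matrix.scalar (Fin 2) δ) ^ 2 = (τ * τ) • N := by
      rw [← ht]
      rw [Matrix.det_fin_two] at hd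
      rw [Matrix.trace_fin_two, pow_two]
      ext i j
      fin_cases i <;> fin_cases j <;>
        simp [Matrix.mul_apply, Fin.sum_univ_two] <;>
        first | ring1 | linear_combination hd
    by_cases h0 : τ = 0
    · subst h0
      have h1 : minpoly (ZMod p) N ∣ (Polynomial.X + Polynomial.C δ) ^ 2 := by
        apply minpoly.dvd
        rw [map_pow, map_add, Polynomial.aeval_X, Polynomial.aeval_C]
        rw [mul_zero, zero_smul] at key
        exact key
      have h2 := (hA.dvd_pow_iff_dvd two_ne_zero).1 h1
      have h3 : N + Matrix.scalar (Fin 2) δ = 0 := by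
        obtain ⟨q, hq⟩ := h2
        have := congrArg (Polynomial.aeval N) hq
        rw [map_mul, minpoly.aeval, zero_mul, map_add, Polynomial.aeval_X,
          Polynomial.aeval_C] at this
        exact this
      refine ⟨!![0, -δ; 1, 0], ?_⟩
      rw [eq_neg_of_add_eq_zero_left h3, pow_two]
      ext i j
      fin_cases i <;> fin_cases j <;> simp [Matrix.mul_apply, Fin.sum_univ_two]
    · refine ⟨τ⁻¹ • (N + Matrix.scalar (Fin 2) δ), ?_⟩
      rw [smul_pow, key, smul_smul]
      have : τ⁻¹ ^ 2 * (τ * τ) = 1 := by field_simp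
      rw [this, one_smul]
end

section
/- Square roots of a nontrivial Jordan block: let p be an odd prime and λ : ZMod p with λ ≠ 0, and let J be the 2×2 matrix over ZMod p with rows (λ, 1) and (0, λ) (a nontrivial Jordan block). Then there exists a 2×2 matrix B over ZMod p with B^2 = J if and only if IsSquare λ holds in ZMod p. -/
theorem sqrt_of_jordan_block (p : ℕ) [Fact p.Prime] (hp : p ≠ 2)
    (lam : ZMod p) (hlam : lam ≠ 0) :
    (∃ B : Matrix (Fin 2) (Fin 2) (ZMod p), B ^ 2 = !![lam, 1; 0, lam]) ↔
      IsSquare lam := by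
  constructor
  · rintro ⟨B, hB⟩
    have h00 := congrFun (congrFun hB 0) 0
    have h01 := congrFun (congrFun hB 0) 1
    have h10 := congrFun (congrFun hB 1) 0
    simp [pow_two, Matrix.mul_apply, Fin.sum_univ_two] at h00 h01 h10
    have hc : B 1 0 = 0 := by
      linear_combination (-(B 1 0)) * h01 + B 0 1 * h10
    refine ⟨B 0 0, ?_⟩
    rw [← h00, hc]
    ring
  · rintro ⟨m, rfl⟩
    have hm : m ≠ 0 := fun h => hlam (by simp [h])
    have h2 : (2 : ZMod p) ≠ 0 := by
      apply Ring.two_ne_zero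
      rwa [ZMod.ringChar_zmod_n]
    refine ⟨!![m, (2 * m)⁻¹; 0, m], ?_⟩
    have h : m * (2 * m)⁻¹ + (2 * m)⁻¹ * m = 1 := by
      have := mul_inv_cancel₀ (mul_ne_zero h2 hm)
      linear_combination this
    rw [pow_two, Matrix.mul_fin_two, h]
    simp
end

section
/- Let p be an odd prime and let A be an element of Matrix.SpecialLinearGroup (Fin 2) (ZMod p) whose underlying matrix is diagonalizable over ZMod p with two distinct eigenvalues λ₁ ≠ λ₂ in ZMod p: there is an invertible 2×2 matrix P over ZMod p with (A : Matrix (Fin 2) (Fin 2) (ZMod p)) = P * Matrix.diagonal ![λ₁, λ₂] * P⁻¹ (necessarily λ₁ * λ₂ = 1). Then there exists B in Matrix.SpecialLinearGroup (Fin 2) (ZMod p) with B^2 = A if and only if IsSquare λ₁ and IsSquare λ₂ hold in ZMod p. -/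
theorem sqrt_of_diagonalizable_SL2 (p : ℕ) [Fact p.Prime] (hp : p ≠ 2)
    (A : Matrix.SpecialLinearGroup (Fin 2) (ZMod p)) (lam₁ lam₂ : ZMod p)
    (hne : lam₁ ≠ lam₂)
    (hdiag : ∃ P : Matrix (Fin 2) (Fin 2) (ZMod p), IsUnit P ∧
      (A : Matrix (Fin 2) (Fin 2) (ZMod p)) = P * Matrix.diagonal ![lam₁, lam₂] * P⁻¹) :
    (∃ B : Matrix.SpecialLinearGroup (Fin 2) (ZMod p), B ^ 2 = A) ↔
      IsSquare lam₁ ∧ IsSquare lam₂ := by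
  obtain ⟨P, hP, hA⟩ := hdiag
  have hPd : IsUnit P.det := (Matrix.isUnit_iff_isUnit_det P).1 hP
  have h1 : P * P⁻¹ = 1 := Matrix.mul_nonsing_inv P hPd
  have h2 : P⁻¹ * P = 1 := Matrix.nonsing_inv_mul P hPd
  have hdet : ∀ D : Matrix (Fin 2) (Fin 2) (ZMod p), (P * D * P⁻¹).det = D.det := by
    intro D
    have h3 : P.det * P⁻¹.det = 1 := by rw [← Matrix.det_mul, h1, Matrix.det_one]
    rw [Matrix.det_mul, Matrix.det_mul]
    linear_combination D.det * h3
  have hl : lam₁ * lam₂ = 1 := by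
    have h := A.det_coe
    rw [hA, hdet] at h
    simpa [Matrix.det_fin_two] using h
  constructor
  · rintro ⟨B, hB⟩
    have hB' : (B : Matrix (Fin 2) (Fin 2) (ZMod p)) * B
        = P * Matrix.diagonal ![lam₁, lam₂] * P⁻¹ := by
      rw [← hA, ← hB, pow_two, Matrix.SpecialLinearGroup.coe_mul]
    obtain ⟨C, hC⟩ : ∃ C, C = P⁻¹ * (B : Matrix (Fin 2) (Fin 2) (ZMod p)) * P := ⟨_, rfl⟩
    have hCC : C * C = Matrix.diagonal ![lam₁, lam₂] := by
      calc C * C = P⁻¹ * (B : Matrix (Fin 2) (Fin 2) (ZMod p)) * (P * P⁻¹) * B * P := by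
            rw [hC]; simp only [mul_assoc]
        _ = P⁻¹ * ((B : Matrix (Fin 2) (Fin 2) (ZMod p)) * B) * P := by
            rw [h1, mul_one]; simp only [mul_assoc]
        _ = (P⁻¹ * P) * Matrix.diagonal ![lam₁, lam₂] * (P⁻¹ * P) := by
            rw [hB']; simp only [mul_assoc]
        _ = _ := by rw [h2, one_mul, mul_one]
    have e00 := congrFun (congrFun hCC 0) 0
    have e01 := congrFun (congrFun hCC 0) 1
    have e11 := congrFun (congrFun hCC 1) 1
    simp [Matrix.mul_apply, Fin.sum_univ_two] at e00 e01 e11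
    have ht : C 0 0 + C 1 1 ≠ 0 := by
      intro h
      apply hne
      linear_combination (C 0 0 - C 1 1) * h - e00 + e11
    have hb : C 0 1 = 0 := by
      have : C 0 1 * (C 0 0 + C 1 1) = 0 := by linear_combination e01
      exact (mul_eq_zero.1 this).resolve_right ht
    refine ⟨⟨C 0 0, ?_⟩, ⟨C 1 1, ?_⟩⟩
    · linear_combination C 1 0 * hb - e00
    · linear_combination C 1 0 * hb - e11
  · rintro ⟨⟨m, hm⟩, -⟩
    have hm0 : m ≠ 0 := by
      rintro rfl
      simp [hm] at hl
    have hm2 : m⁻¹ * m⁻¹ = lam₂ := by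
      rw [hm] at hl
      field_simp
      linear_combination -hl
    have hdB : (P * Matrix.diagonal ![m, m⁻¹] * P⁻¹).det = 1 := by
      rw [hdet]
      simp [hm0]
    obtain ⟨B, hB⟩ : ∃ B : Matrix.SpecialLinearGroup (Fin 2) (ZMod p),
        (B : Matrix (Fin 2) (Fin 2) (ZMod p)) = P * Matrix.diagonal ![m, m⁻¹] * P⁻¹ :=
      ⟨⟨_, hdB⟩, rfl⟩
    refine ⟨B, ?_⟩
    · rw [pow_two]
      apply Subtype.ext
      rw [Matrix.SpecialLinearGroup.coe_mul, hA, hB]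
      have hD : Matrix.diagonal ![m, m⁻¹] * Matrix.diagonal ![m, m⁻¹]
          = Matrix.diagonal ![lam₁, lam₂] := by
        rw [Matrix.diagonal_mul_diagonal]
        congr 1
        funext i
        fin_cases i
        · simp [hm]
        · simpa using hm2
      calc P * Matrix.diagonal ![m, m⁻¹] * P⁻¹ * (P * Matrix.diagonal ![m, m⁻¹] * P⁻¹)
          = P * Matrix.diagonal ![m, m⁻¹] * (P⁻¹ * P) * Matrix.diagonal ![m, m⁻¹] * P⁻¹ := by
            simp only [mul_assoc]
        _ = P * (Matrix.diagonal ![m, m⁻¹] * Matrix.diagonal ![m, m⁻¹]) * P⁻¹ := by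
            rw [h2, mul_one]; simp only [mul_assoc]
        _ = _ := by rw [hD]
end

section
/- Let p be an odd prime and let A be an element of Matrix.SpecialLinearGroup (Fin 2) (ZMod p) whose underlying matrix is diagonalizable over ZMod p with eigenvalues λ₁, λ₂ in ZMod p that are both non-squares (¬IsSquare λ₁ and ¬IsSquare λ₂): there is an invertible 2×2 matrix P over ZMod p with (A : Matrix (Fin 2) (Fin 2) (ZMod p)) = P * Matrix.diagonal ![λ₁, λ₂] * P⁻¹. Then there exists B in Matrix.SpecialLinearGroup (Fin 2) (ZMod p) with B^2 = A if and only if λ₁ = λ₂, i.e. if and only if A is a scalar matrix. -/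
theorem sqrt_of_diagonalizable_SL2_nonsquare_eigenvalues (p : ℕ) [Fact p.Prime] (hp : p ≠ 2)
    (A : Matrix.SpecialLinearGroup (Fin 2) (ZMod p)) (lam₁ lam₂ : ZMod p)
    (h₁ : ¬ IsSquare lam₁) (h₂ : ¬ IsSquare lam₂)
    (hdiag : ∃ P : Matrix (Fin 2) (Fin 2) (ZMod p), IsUnit P ∧
      (A : Matrix (Fin 2) (Fin 2) (ZMod p)) = P * Matrix.diagonal ![lam₁, lam₂] * P⁻¹) :
    (∃ B : Matrix.SpecialLinearGroup (Fin 2) (ZMod p), B ^ 2 = A) ↔ lam₁ = lam₂ := by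
  obtain ⟨P, hP, hA⟩ := hdiag
  have hPd : IsUnit P.det := (Matrix.isUnit_iff_isUnit_det P).1 hP
  have hPP : P * P⁻¹ = 1 := Matrix.mul_nonsing_inv P hPd
  have hPP' : P⁻¹ * P = 1 := Matrix.nonsing_inv_mul P hPd
  constructor
  · rintro ⟨B, rfl⟩
    have hB : (B : Matrix (Fin 2) (Fin 2) (ZMod p)) * B
        = P * Matrix.diagonal ![lam₁, lam₂] * P⁻¹ := by
      rw [← hA, Matrix.SpecialLinearGroup.coe_pow, sq]
    obtain ⟨C, hC⟩ : ∃ C, C = P⁻¹ * (B : Matrix (Fin 2) (Fin 2) (ZMod p)) * P := ⟨_, rfl⟩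
    have hCC : C * C = Matrix.diagonal ![lam₁, lam₂] := by
      calc C * C = P⁻¹ * (B : Matrix (Fin 2) (Fin 2) (ZMod p)) * (P * P⁻¹) * B * P := by
            rw [hC]; simp only [Matrix.mul_assoc]
        _ = P⁻¹ * ((B : Matrix (Fin 2) (Fin 2) (ZMod p)) * B) * P := by
            rw [hPP]; simp only [Matrix.mul_assoc, Matrix.one_mul]
        _ = (P⁻¹ * P) * Matrix.diagonal ![lam₁, lam₂] * (P⁻¹ * P) := by
            rw [hB]; simp only [Matrix.mul_assoc]
        _ = _ := by rw [hPP']; simp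
    have e00 := congrFun (congrFun hCC 0) 0
    have e01 := congrFun (congrFun hCC 0) 1
    have e11 := congrFun (congrFun hCC 1) 1
    simp [Matrix.mul_apply, Fin.sum_univ_two] at e00 e01 e11
    have hz : C 0 1 * (C 0 0 + C 1 1) = 0 := by linear_combination e01
    rcases mul_eq_zero.1 hz with h | h
    · exact absurd ⟨C 0 0, by rw [← e00, h]; ring⟩ h₁
    · linear_combination (C 0 0 - C 1 1) * h - e00 + e11
  · rintro rfl
    have hD : Matrix.diagonal ![lam₁, lam₁] = lam₁ • (1 : Matrix (Fin 2) (Fin 2) (ZMod p)) := by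
      ext i j; fin_cases i <;> fin_cases j <;> simp
    have hA' : (A : Matrix (Fin 2) (Fin 2) (ZMod p)) = lam₁ • 1 := by
      rw [hA, hD]; simp [hPP]
    have hdet := A.det_coe
    rw [hA'] at hdet
    have hl : lam₁ = -1 := by
      have h : lam₁ = 1 ∨ lam₁ = -1 := by simpa [Matrix.det_fin_two] using hdet
      rcases h with h | h
      · exact absurd ⟨1, by rw [h]; ring⟩ h₁
      · exact h
    obtain ⟨B, hB⟩ : ∃ B : Matrix.SpecialLinearGroup (Fin 2) (ZMod p),
        (B : Matrix (Fin 2) (Fin 2) (ZMod p)) = !![0, 1; -1, 0] :=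
      ⟨⟨!![0, 1; -1, 0], by simp [Matrix.det_fin_two]⟩, rfl⟩
    have key : ((B ^ 2 : Matrix.SpecialLinearGroup (Fin 2) (ZMod p)) :
        Matrix (Fin 2) (Fin 2) (ZMod p)) = A := by
      rw [Matrix.SpecialLinearGroup.coe_pow, hA', hl, sq, hB]
      ext i j
      fin_cases i <;> fin_cases j <;> simp [Matrix.mul_apply, Fin.sum_univ_two]
    exact ⟨B, Subtype.ext key⟩
end

section
/- Let p be a prime and let A be a 2×2 matrix over ZMod p whose characteristic polynomial Matrix.charpoly A is irreducible over ZMod p (so A is invertible and semisimple, with a pair of conjugate eigenvalues in the quadratic extension GaloisField p 2). Then there exists a 2×2 matrix B over ZMod p with B^2 = A if and only if there exists λ : GaloisField p 2 which is a root of the characteristic polynomial of A mapped to GaloisField p 2 (i.e. Polynomial.aeval λ (Matrix.charpoly A) = 0) and which satisfies IsSquare λ in GaloisField p 2. -/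
open Polynomial in
theorem exists_root_of_deg_two (p : ℕ) [Fact p.Prime] (g : (ZMod p)[X]) (hg : g.natDegree = 2) :
    ∃ m : GaloisField p 2, aeval m g = 0 := by
  have hg0 : g ≠ 0 := by rintro rfl; simp at hg
  have hgu : ¬ IsUnit g := fun h => by
    have := natDegree_eq_zero_of_isUnit h
    omega
  obtain ⟨q, hq, hqg⟩ := WfDvdMonoid.exists_irreducible_factor hgu hg0
  have hd : q.natDegree ∣ 2 := by
    have h1 := natDegree_le_of_dvd hqg hg0
    have h2 := hq.natDegree_pos
    rw [hg] at h1
    interval_cases q.natDegree <;> norm_num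
  have : Fact (Irreducible q) := ⟨hq⟩
  have hf : Module.finrank (ZMod p) (AdjoinRoot q) = q.natDegree := by
    rw [(AdjoinRoot.powerBasis hq.ne_zero).finrank, AdjoinRoot.powerBasis_dim]
  have : Module.Finite (ZMod p) (AdjoinRoot q) := (AdjoinRoot.powerBasis hq.ne_zero).finite
  have : Finite (AdjoinRoot q) := Module.finite_of_finite (ZMod p)
  obtain ⟨ψ⟩ := FiniteField.nonempty_algHom_of_finrank_dvd (F := ZMod p) (K := AdjoinRoot q)
    (L := GaloisField p 2) (by rw [hf, GaloisField.finrank p two_ne_zero]; exact hd)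
  refine ⟨ψ (AdjoinRoot.root q), ?_⟩
  obtain ⟨r, rfl⟩ := hqg
  rw [map_mul, aeval_algHom_apply, AdjoinRoot.aeval_eq, AdjoinRoot.mk_self]
  simp

open Polynomial in
theorem aeval_charpoly_eq_det {F L : Type*} [Field F] [Field L] [Algebra F L]
    (M : Matrix (Fin 2) (Fin 2) F) (x : L) :
    aeval x M.charpoly = (Matrix.scalar (Fin 2) x - M.map (algebraMap F L)).det := by
  rw [← Matrix.eval_charpoly, Matrix.charpoly_map, eval_map_algebraMap]

theorem sqrt_criterion_irreducible_charpoly (p : ℕ) [Fact p.Prime]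
    (A : Matrix (Fin 2) (Fin 2) (ZMod p)) (hA : Irreducible (Matrix.charpoly A)) :
    (∃ B : Matrix (Fin 2) (Fin 2) (ZMod p), B ^ 2 = A) ↔
      ∃ lam : GaloisField p 2,
        Polynomial.aeval lam (Matrix.charpoly A) = 0 ∧ IsSquare lam := by
  constructor
  · rintro ⟨B, rfl⟩
    obtain ⟨m, hm⟩ := exists_root_of_deg_two p B.charpoly (by simp)
    refine ⟨m * m, ?_, m, rfl⟩
    rw [aeval_charpoly_eq_det] at hm ⊢
    have hc : Commute (Matrix.scalar (Fin 2) m) (B.map (algebraMap (ZMod p) (GaloisField p 2))) :=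
      Matrix.scalar_commute m (fun r => mul_comm _ _) _
    have h : Matrix.scalar (Fin 2) (m * m) - (B ^ 2).map (algebraMap (ZMod p) (GaloisField p 2))
        = (Matrix.scalar (Fin 2) m - B.map (algebraMap (ZMod p) (GaloisField p 2))) *
          (Matrix.scalar (Fin 2) m + B.map (algebraMap (ZMod p) (GaloisField p 2))) := by
      rw [pow_two, Matrix.map_mul, map_mul, sub_mul, mul_add, mul_add, hc.eq]
      abel
    rw [h, Matrix.det_mul, hm, zero_mul]
  · rintro ⟨_, hl, m, rfl⟩
    have : Fact (Irreducible A.charpoly) := ⟨hA⟩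
    let ψ : AdjoinRoot A.charpoly →ₐ[ZMod p] GaloisField p 2 :=
      AdjoinRoot.liftAlgHom _ (Algebra.ofId _ _) (m * m) hl
    let φ : AdjoinRoot A.charpoly →ₐ[ZMod p] Matrix (Fin 2) (Fin 2) (ZMod p) :=
      Ideal.Quotient.liftₐ _ (Polynomial.aeval A) (by
        intro a ha
        obtain ⟨b, rfl⟩ := Ideal.mem_span_singleton.1 ha
        rw [map_mul, Matrix.aeval_self_charpoly, zero_mul])
    have hφ : φ (AdjoinRoot.root _) = A := by
      change Polynomial.aeval A Polynomial.X = A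
      simp
    have hf : Module.finrank (ZMod p) (AdjoinRoot A.charpoly) = 2 := by
      rw [(AdjoinRoot.powerBasis hA.ne_zero).finrank, AdjoinRoot.powerBasis_dim]
      simp
    have : Module.Finite (ZMod p) (AdjoinRoot A.charpoly) :=
      (AdjoinRoot.powerBasis hA.ne_zero).finite
    have hinj : Function.Injective ψ := ψ.toRingHom.injective
    have hsurj : Function.Surjective ψ :=
      (LinearMap.injective_iff_surjective_of_finrank_eq_finrank (f := ψ.toLinearMap)
        (by rw [hf, GaloisField.finrank p two_ne_zero])).1 hinj
    obtain ⟨k, hk⟩ := hsurj m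
    refine ⟨φ k, ?_⟩
    have : k ^ 2 = AdjoinRoot.root _ := by
      apply hinj
      rw [map_pow, hk, pow_two]
      exact (AdjoinRoot.liftAlgHom_root _ _ _ _).symm
    rw [← map_pow, this, hφ]
end
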